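/- arXiv:2603.18484 — 2 statements merged into one kernel-verified Lean document; each statement's English description precedes it below -/
import Mathlib

section
/- Let P be a set of 11 points in general position in the plane, and let p ∈ P be a vertex of the convex hull of P. Assume that every set of 10 points in general position determines a 5-hole. Then at least one of the following holds: (a) there is a 5-hole of P having p as a vertex; or (b) there is a 5-hole of P having two vertices a and b such that the triangle p,a,b contains no point of P in its interior. -/
open scoped Classical

noncomputable section

abbrev Pt : Type := EuclideanSpace ℝ (Fin 2)

/-- No three distinct points of `P` are collinear. -/
def GenPos (P : Set Pt) : Prop :=
  ∀ a ∈ P, ∀ b ∈ P, ∀ c ∈ P, a ≠ b → a ≠ c → b ≠ c → ¬ Collinear ℝ ({a, b, c} : Set Pt)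

/-- A set of points is in convex position if every point is an extreme point:
no point lies in the convex hull of the others. -/
def ConvexPos (S : Set Pt) : Prop := ∀ p ∈ S, p ∉ convexHull ℝ (S \ {p})

/-- The 5-holes of `P`: 5-element subsets of `P` in convex position whose
convex hull has no point of `P` in its interior. -/
def Holes5 (P : Set Pt) : Set (Finset Pt) :=
  {H | H.card = 5 ∧ ↑H ⊆ P ∧ ConvexPos ↑H ∧
    ∀ x ∈ P, x ∉ interior (convexHull ℝ (H : Set Pt))}

/-- Orientation determinant of the triple `(o, a, b)`. -/
def det2 (o a b : Pt) : ℝ :=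
  (a 0 - o 0) * (b 1 - o 1) - (a 1 - o 1) * (b 0 - o 0)

/-- `v` lists the vertices of a strictly convex polygon in cyclic order:
for every edge `v i v (i+1)`, all other vertices lie strictly on the same side. -/
def ConvexCyclicOrder {n : ℕ} [NeZero n] (v : Fin n → Pt) : Prop :=
  ∃ σ : ℝ, (σ = 1 ∨ σ = -1) ∧
    ∀ i j : Fin n, j ≠ i → j ≠ i + 1 → 0 < σ * det2 (v i) (v (i + 1)) (v j)

/-- `x` lies in the closed angular region at `p` spanned by the rays from `p`
through `a` and through `c` (the convex cone generated by the two rays). -/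
def InAngle (a p c x : Pt) : Prop :=
  ∃ s t : ℝ, 0 ≤ s ∧ 0 ≤ t ∧ x = p + s • (a - p) + t • (c - p)

/-- The extreme points (convex-hull vertices) of a planar point set. -/
def extremePts (P : Set Pt) : Set Pt := {p ∈ P | p ∉ convexHull ℝ (P \ {p})}

/-- What remains of `P` after peeling off the first `n` convex layers. -/
def layerRest (P : Set Pt) : ℕ → Set Pt
  | 0 => P
  | n + 1 => layerRest P n \ extremePts (layerRest P n)

/-- The `i`-th convex layer of `P` (0-indexed). -/
def layer (P : Set Pt) (i : ℕ) : Set Pt := extremePts (layerRest P i)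

/-- The number of convex layers of `P`. -/
def numLayers (P : Set Pt) : ℕ := {i | (layer P i).Nonempty}.ncard

/-!
Order the points other than `p` clockwise around `p` and forget everything except this order and
the orientations of triples. A 5-hole at `p` is then a chain of four points that bulges away from
`p` and whose edges span empty triangles with `p`.

Suppose a set has a 5-hole, but neither a 5-hole at `p` nor a 5-hole with two vertices that span an
empty triangle with `p`, and take such a set with as few points as possible. Removing a point that
lies in no triangle of the set and in no triangle at `p` creates no new holes and no new empty
triangles at `p`. By minimality every such exposed point is therefore a vertex of every 5-hole, and
once one of them is removed there is no 5-hole left, not even at `p`. Consequently the edges of a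
5-hole on the side away from `p` are edges of the convex hull, whereas any two of its vertices have
a point in the triangle that they span with `p`.

Distinguish cases by the number of edges on the side of `p`, between one and four. With one edge, a
point in the triangle over it extends the empty quadrilateral left by an exposed vertex to a 5-hole.
With more edges, removing exposed vertices leaves a point or an edge pinched between the remaining
points on its two sides. An infinite descent through angular neighbours, or a comparison of the
empty quadrilaterals on the edge, then produces a 5-hole, possibly at `p`.
-/

/-- Five points in convex position, listed counterclockwise with respect to the orientation
predicate `ccw`. -/
structure ConvexPentagon {α : Type*} (ccw : α → α → α → Prop) (a b c d e : α) : Prop where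
  abc : ccw a b c
  abd : ccw a b d
  abe : ccw a b e
  acd : ccw a c d
  ace : ccw a c e
  ade : ccw a d e
  bcd : ccw b c d
  bce : ccw b c e
  bde : ccw b d e
  cde : ccw c d e

theorem ConvexPentagon.rotate {α : Type*} {ccw : α → α → α → Prop} {a b c d e : α}
    (hccw : ∀ {a b c}, ccw a b c → ccw b c a) (h : ConvexPentagon ccw a b c d e) :
    ConvexPentagon ccw b c d e a where
  abc := h.bcd
  abd := h.bce
  abe := hccw h.abc
  acd := h.bde
  ace := hccw h.abd
  ade := hccw h.abe
  bcd := h.cde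
  bce := hccw h.acd
  bde := hccw h.ace
  cde := hccw h.ade

theorem ConvexPentagon.map {α β : Type*} {ccw : α → α → α → Prop} {ccw' : β → β → β → Prop}
    {a b c d e : α} (f : α → β) (hccw : ∀ {a b c}, ccw a b c → ccw' (f a) (f b) (f c))
    (h : ConvexPentagon ccw a b c d e) :
    ConvexPentagon ccw' (f a) (f b) (f c) (f d) (f e) where
  abc := hccw h.abc
  abd := hccw h.abd
  abe := hccw h.abe
  acd := hccw h.acd
  ace := hccw h.ace
  ade := hccw h.ade
  bcd := hccw h.bcd
  bce := hccw h.bce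
  bde := hccw h.bde
  cde := hccw h.cde

/-- The orientations of the triples of a planar point set, together with the clockwise angular order
of its points around an exterior point `p`: the abstract setting of the argument. The laws
`first`, `second`, `third`, `last` are the transitivity of the directions at `t`, named after the
position of `t` among the four points in the angular order. -/
structure RadialSystem (α : Type*) [LinearOrder α] where
  ccw : α → α → α → Prop
  rotate {a b c : α} : ccw a b c → ccw b c a
  asymm {a b c : α} : ccw a b c → ¬ ccw b a c
  total {a b c : α} : a ≠ b → b ≠ c → a ≠ c → ccw a b c ∨ ccw b a c
  first {t a b c : α} : ccw t a b → ccw t b c → t < a → t < b → t < c → ccw t a c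
  second {t a b c : α} : ccw a t b → ccw t b c → a < t → t < b → t < c → ccw a t c
  third {t a b c : α} : ccw a b t → ccw b t c → a < t → b < t → t < c → ccw a t c
  last {t a b c : α} : ccw t a b → ccw t b c → a < t → b < t → c < t → ccw t a c

namespace RadialSystem

section Basic

variable {α : Type*} [LinearOrder α] (R : RadialSystem α) {a b c d t s x : α}

attribute [local grind →] rotate asymm first second third last

theorem swap_of_not_ccw (h : ¬ R.ccw a b c) : R.ccw b a c ∨ a = b ∨ b = c ∨ a = c := by
  by_contra! h'
  exact (R.total h'.2.1 h'.2.2.1 h'.2.2.2).elim h h'.1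

attribute [local grind →] swap_of_not_ccw

theorem ccw_of_not (h : ¬ R.ccw a b c) (hab : a ≠ b) (hbc : b ≠ c) (hac : a ≠ c) : R.ccw b a c :=
  (R.total hab hbc hac).resolve_left h

theorem rotate' (h : R.ccw a b c) : R.ccw c a b := R.rotate (R.rotate h)

theorem ccw_ne (h : R.ccw a b c) : a ≠ b ∧ b ≠ c ∧ a ≠ c := by grind

theorem ccw_trans (ha : R.ccw t s a) (hb : R.ccw t s b) (hc : R.ccw t s c)
    (hab : R.ccw t a b) (hbc : R.ccw t b c) : R.ccw t a c := by
  rcases (R.ccw_ne ha).1.lt_or_gt <;> rcases (R.ccw_ne hab).1.lt_or_gt <;>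
    rcases (R.ccw_ne hbc).1.lt_or_gt <;> rcases (R.ccw_ne hc).2.2.lt_or_gt <;> grind

theorem ccw_trans' (ha : R.ccw t a s) (hb : R.ccw t b s) (hc : R.ccw t c s)
    (hab : R.ccw t a b) (hbc : R.ccw t b c) : R.ccw t a c := by
  rcases (R.ccw_ne ha).2.2.lt_or_gt <;> rcases (R.ccw_ne hab).1.lt_or_gt <;>
    rcases (R.ccw_ne hbc).1.lt_or_gt <;> rcases (R.ccw_ne hc).1.lt_or_gt <;> grind

/-- `x` lies inside the counterclockwise triangle `a`, `b`, `c`. -/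
def InTriangle (a b c x : α) : Prop := R.ccw a b x ∧ R.ccw b c x ∧ R.ccw c a x

variable {R}

theorem InTriangle.ccw (h : R.InTriangle a b c x) : R.ccw a b c := by
  obtain ⟨h1, h2, h3⟩ := h
  rcases (R.ccw_ne h1).2.2.lt_or_gt <;> rcases (R.ccw_ne h1).2.1.lt_or_gt <;>
    rcases (R.ccw_ne h2).2.1.lt_or_gt <;> grind

theorem InTriangle.exists_lt (h : R.InTriangle a b c x) : a < x ∨ b < x ∨ c < x := by
  obtain ⟨h1, h2, h3⟩ := h
  by_contra! h'
  have := R.first (R.rotate' h1) (R.rotate' h2)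
    (h'.1.lt_of_ne' (R.ccw_ne h1).2.2) (h'.2.1.lt_of_ne' (R.ccw_ne h1).2.1)
    (h'.2.2.lt_of_ne' (R.ccw_ne h2).2.1)
  exact R.asymm h3 (R.rotate this)

theorem InTriangle.exists_gt (h : R.InTriangle a b c x) : x < a ∨ x < b ∨ x < c := by
  obtain ⟨h1, h2, h3⟩ := h
  by_contra! h'
  have := R.last (R.rotate' h1) (R.rotate' h2)
    (h'.1.lt_of_ne (R.ccw_ne h1).2.2) (h'.2.1.lt_of_ne (R.ccw_ne h1).2.1)
    (h'.2.2.lt_of_ne (R.ccw_ne h2).2.1)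
  exact R.asymm h3 (R.rotate this)

theorem InTriangle.not_all_left (h : R.InTriangle a b c x) :
    ¬ (R.ccw x d a ∧ R.ccw x d b ∧ R.ccw x d c) := by
  rintro ⟨ha, hb, hc⟩
  obtain ⟨h1, h2, h3⟩ := h
  exact R.asymm h3 (R.rotate (R.ccw_trans ha hb hc (R.rotate' h1) (R.rotate' h2)))

theorem InTriangle.not_all_right (h : R.InTriangle a b c x) :
    ¬ (R.ccw x a d ∧ R.ccw x b d ∧ R.ccw x c d) := by
  rintro ⟨ha, hb, hc⟩
  obtain ⟨h1, h2, h3⟩ := h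
  exact R.asymm h3 (R.rotate (R.ccw_trans' ha hb hc (R.rotate' h1) (R.rotate' h2)))

end Basic

section Holes

variable {α : Type*} [LinearOrder α] (R : RadialSystem α) (S : Finset α) {a b c d e u x y : α}

attribute [local grind →] rotate asymm swap_of_not_ccw

/-- A counterclockwise empty triangle of `S`. -/
structure Hole3 (a b c : α) : Prop where
  mem : a ∈ S ∧ b ∈ S ∧ c ∈ S
  ccw : R.ccw a b c
  empty : ∀ x ∈ S, ¬ R.InTriangle a b c x

/-- A counterclockwise empty convex quadrilateral of `S`. -/
structure Hole4 (a b c d : α) : Prop where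
  mem : a ∈ S ∧ b ∈ S ∧ c ∈ S ∧ d ∈ S
  abc : R.ccw a b c
  bcd : R.ccw b c d
  cda : R.ccw c d a
  dab : R.ccw d a b
  empty : ∀ x ∈ S, ¬ (R.ccw a b x ∧ R.ccw b c x ∧ R.ccw c d x ∧ R.ccw d a x)

/-- A counterclockwise empty convex pentagon of `S`. -/
structure Hole5 (a b c d e : α) : Prop extends ConvexPentagon R.ccw a b c d e where
  mem : a ∈ S ∧ b ∈ S ∧ c ∈ S ∧ d ∈ S ∧ e ∈ S
  empty : ∀ x ∈ S,
    ¬ (R.ccw a b x ∧ R.ccw b c x ∧ R.ccw c d x ∧ R.ccw d e x ∧ R.ccw e a x)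

variable {R S}

theorem Hole3.rotate (h : R.Hole3 S a b c) : R.Hole3 S b c a where
  mem := by have := h.mem; tauto
  ccw := R.rotate h.ccw
  empty x hx := by have := h.empty x hx; unfold InTriangle at *; tauto

theorem Hole4.rotate (h : R.Hole4 S a b c d) : R.Hole4 S b c d a where
  mem := by have := h.mem; tauto
  abc := h.bcd
  bcd := h.cda
  cda := h.dab
  dab := h.abc
  empty x hx := by have := h.empty x hx; tauto

theorem Hole5.rotate (h : R.Hole5 S a b c d e) : R.Hole5 S b c d e a where
  toConvexPentagon := h.toConvexPentagon.rotate R.rotate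
  mem := by have := h.mem; tauto
  empty x hx := by have := h.empty x hx; tauto

theorem Hole3.insert (h : R.Hole3 S a b c) (h' : R.Hole3 S a y b) (hc : R.ccw c a y)
    (hb : R.ccw y b c) : R.Hole4 S a y b c where
  mem := by have := h.mem; have := h'.mem; tauto
  abc := h'.ccw
  bcd := hb
  cda := R.rotate h.ccw
  dab := hc
  empty x hx := by
    have h1 := h.empty x hx
    have h2 := h'.empty x hx
    grind [InTriangle, h.ccw]

theorem Hole4.insert (h : R.Hole4 S a b c d) (h' : R.Hole3 S a y b) (hd : R.ccw d a y)
    (hc : R.ccw y b c) : R.Hole5 S a y b c d := by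
  have hybd : R.ccw y b d := R.rotate' (R.ccw_trans h.bcd (R.rotate h.abc) (R.rotate hc)
    (R.rotate' h.dab) (R.rotate' h'.ccw))
  have hayc : R.ccw a y c :=
    R.ccw_trans' (R.rotate hd) (R.rotate h.dab) (R.rotate' h.cda) h'.ccw h.abc
  have hycd : R.ccw y c d :=
    R.rotate (R.ccw_trans hd h.dab (R.rotate h.cda) (R.rotate' hybd) (R.rotate' h.bcd))
  have hmem := h.mem
  refine ⟨⟨h'.ccw, hayc, R.rotate hd, h.abc, R.rotate h.dab, R.rotate' h.cda, hc, hybd, hycd,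
    h.bcd⟩, ?_, fun x hx => ?_⟩
  · have := h'.mem
    tauto
  · have := h.empty x hx
    have := h'.empty x hx
    have := h.abc
    grind [InTriangle]

end Holes

section Configurations

variable {α : Type*} [LinearOrder α] (R : RadialSystem α) (S T : Finset α)
  {a b c d e u v x y : α}

/-- `S` has an empty convex pentagon. -/
def HasHole5 : Prop := ∃ a b c d e, R.Hole5 S a b c d e

/-- The triangle `p`, `a`, `b` contains no other point of `S`: the points of `S` angularly between
`a` and `b` lie beyond the segment `ab`, as seen from `p`. -/
def Clear (a b : α) : Prop := ∀ x ∈ S, a < x → x < b → R.ccw a b x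

/-- `p`, `d`, `c`, `b`, `a` is an empty convex pentagon: a chain that bulges away from `p` and whose
edges span empty triangles with `p`. -/
structure ClearCap (a b c d : α) : Prop where
  mem : a ∈ S ∧ b ∈ S ∧ c ∈ S ∧ d ∈ S
  lt : a < b ∧ b < c ∧ c < d
  cap : R.ccw b a c ∧ R.ccw c b d
  clear : R.Clear S a b ∧ R.Clear S b c ∧ R.Clear S c d

/-- `S ∪ {p}` has an empty convex pentagon with vertex `p`. -/
def HasClearCap : Prop := ∃ a b c d, R.ClearCap S a b c d

/-- `S` has an empty convex pentagon two of whose vertices span an empty triangle with `p`. -/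
def HasClearHole : Prop :=
  ∃ a b c d e x y, R.Hole5 S a b c d e ∧ x ∈ [a, b, c, d, e] ∧ y ∈ [a, b, c, d, e] ∧
    x < y ∧ R.Clear S x y

/-- `S ∪ {p}` has no empty convex pentagon, with or without `p` as a vertex. -/
structure Barren : Prop where
  not_hasHole5 : ¬ R.HasHole5 S
  not_hasClearCap : ¬ R.HasClearCap S

/-- `u` lies in no triangle of `S` and in no triangle `p`, `a`, `b`; deleting such a point creates
no new empty pentagon and no new empty triangle at `p`. -/
structure Exposed (u : α) : Prop where
  not_inTriangle : ∀ a ∈ S, ∀ b ∈ S, ∀ c ∈ S, ¬ R.InTriangle a b c u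
  above : ∀ a ∈ S, ∀ b ∈ S, a < u → u < b → R.ccw a b u

variable {R S T}

theorem InTriangle.nested (h : R.InTriangle a y b v) (h' : R.InTriangle a v b x) :
    R.InTriangle a y b x :=
  ⟨R.ccw_trans' h.ccw (R.rotate h.2.2) (R.rotate h'.2.2) h.1 h'.1,
    R.rotate' (R.ccw_trans h'.2.2 h.2.2 (R.rotate' h.ccw) (R.rotate h'.2.1) (R.rotate h.2.1)),
    h'.2.2⟩

theorem InTriangle.ccw_left (h : R.InTriangle a y b x) (hb : R.ccw d a b) (hy : R.ccw d a y) :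
    R.ccw d a x :=
  R.rotate' (R.ccw_trans h.1 h.ccw (R.rotate hy) (R.rotate h.2.2) (R.rotate hb))

theorem InTriangle.ccw_right (h : R.InTriangle a y b x) (ha : R.ccw a b c) (hy : R.ccw y b c) :
    R.ccw x b c :=
  R.rotate' (R.ccw_trans' (R.rotate hy) (R.rotate' h.ccw) (R.rotate h.2.1) (R.rotate ha) h.2.2)

theorem exists_hole3 (ha : a ∈ S) (hy : y ∈ S) (hb : b ∈ S) (h : R.ccw a y b) :
    ∃ z, (z = y ∨ R.InTriangle a y b z) ∧ R.Hole3 S a z b := by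
  obtain ⟨z, hz, hmin⟩ := Finset.exists_min_image
    (S.filter fun z => z = y ∨ R.InTriangle a y b z) (fun z => (S.filter (R.InTriangle a z b)).card)
    ⟨y, by simp [hy]⟩
  obtain ⟨hzS, hz⟩ := Finset.mem_filter.1 hz
  have hazb : R.ccw a z b := by
    rcases hz with rfl | hz
    exacts [h, R.rotate hz.2.2]
  refine ⟨z, hz, ⟨ha, hzS, hb⟩, hazb, fun x hx hxz => ?_⟩
  have hxy : R.InTriangle a y b x := by
    rcases hz with rfl | hz
    exacts [hxz, hz.nested hxz]
  refine (hmin x (by simp [hx, hxy])).not_gt (Finset.card_lt_card ?_)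
  refine (Finset.ssubset_iff_of_subset fun w hw => ?_).2 ⟨x, by simp [hx, hxz], ?_⟩
  · simp only [Finset.mem_filter] at hw ⊢
    exact ⟨hw.1, hxz.nested hw.2⟩
  · intro hxx
    exact (R.ccw_ne (Finset.mem_filter.1 hxx).2.1).2.1 rfl

theorem Hole4.not_wedge (h : R.Hole4 S a b c d) (hS : ¬ R.HasHole5 S) (hy : y ∈ S)
    (hab : R.ccw a y b) (hda : R.ccw d a y) (hbc : R.ccw y b c) : False := by
  obtain ⟨z, hz, hz3⟩ := exists_hole3 h.mem.1 hy h.mem.2.1 hab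
  refine hS ⟨_, _, _, _, _, h.insert hz3 ?_ ?_⟩
  · rcases hz with rfl | hz
    exacts [hda, hz.ccw_left h.dab hda]
  · rcases hz with rfl | hz
    exacts [hbc, hz.ccw_right h.abc hbc]

theorem Hole5.hole4 (h : R.Hole5 S a b c d e) : R.Hole4 S a b c d where
  mem := by have := h.mem; tauto
  abc := h.abc
  bcd := h.bcd
  cda := R.rotate h.acd
  dab := R.rotate' h.abd
  empty := by
    rintro x hx ⟨hab, hbc, hcd, hda⟩
    refine h.empty x hx ⟨hab, hbc, hcd, ?_, ?_⟩
    · exact R.ccw_trans' (R.rotate h.cde) (R.rotate' h.acd) (R.rotate hcd) (R.rotate h.ade) hda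
    · exact R.rotate' (R.ccw_trans hab h.abd h.abe (R.rotate hda) h.ade)

theorem Hole4.mono (h : R.Hole4 S a b c d) (hTS : T ⊆ S) (ha : a ∈ T) (hb : b ∈ T) (hc : c ∈ T)
    (hd : d ∈ T) : R.Hole4 T a b c d :=
  ⟨⟨ha, hb, hc, hd⟩, h.abc, h.bcd, h.cda, h.dab, fun x hx => h.empty x (hTS hx)⟩

namespace Exposed

theorem of_isLeast (hu : ∀ x ∈ S, u ≤ x) : R.Exposed S u where
  not_inTriangle a ha b hb c hc h := by
    have := h.exists_lt
    grind
  above a ha b _ hau := absurd hau (hu a ha).not_gt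

theorem of_isGreatest (hu : ∀ x ∈ S, x ≤ u) : R.Exposed S u where
  not_inTriangle a ha b hb c hc h := by
    have := h.exists_gt
    grind
  above a _ b hb _ hub := absurd hub (hu b hb).not_gt

attribute [local grind →] rotate asymm swap_of_not_ccw

theorem tail_of_edge (hvu : v < u) (h : ∀ x ∈ S, x ≠ u → x ≠ v → R.ccw u v x) :
    R.Exposed S u where
  not_inTriangle a ha b hb c hc ht := by
    have hleft : ∀ x ∈ S, x ≠ u → x = v ∨ R.ccw u v x := by grind
    have hright : ∀ x ∈ S, ¬ R.ccw x v u := fun x hx hxvu =>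
      R.asymm hxvu (R.rotate (h x hx (R.ccw_ne hxvu).2.2 (R.ccw_ne hxvu).1))
    obtain ⟨hab, hbc, hca⟩ := id ht
    obtain rfl | ha' := hleft a ha (R.ccw_ne hab).2.2
    · exact hright c hc hca
    obtain rfl | hb' := hleft b hb (R.ccw_ne hab).2.1
    · exact hright a ha hab
    obtain rfl | hc' := hleft c hc (R.ccw_ne hbc).2.1
    · exact hright b hb hbc
    exact ht.not_all_left ⟨ha', hb', hc'⟩
  above a ha b hb hau hub := by
    have hb' : R.ccw u v b := h b hb hub.ne' (hvu.trans hub).ne'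
    by_contra hab
    obtain rfl | hav := eq_or_ne a v
    · grind
    have ha' : R.ccw u v a := h a ha hau.ne hav
    have := R.third (a := v) (b := a) (t := u) (c := b) (R.rotate ha')
    grind

theorem head_of_edge (hvu : v < u) (h : ∀ x ∈ S, x ≠ u → x ≠ v → R.ccw u v x) :
    R.Exposed S v where
  not_inTriangle a ha b hb c hc ht := by
    have hleft : ∀ x ∈ S, x ≠ v → x = u ∨ R.ccw v x u := by grind
    have hright : ∀ x ∈ S, ¬ R.ccw u x v := fun x hx huxv =>
      R.asymm huxv (R.rotate' (h x hx (R.ccw_ne huxv).1.symm (R.ccw_ne huxv).2.1))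
    obtain ⟨hab, hbc, hca⟩ := id ht
    obtain rfl | ha' := hleft a ha (R.ccw_ne hab).2.2
    · exact hright b hb hab
    obtain rfl | hb' := hleft b hb (R.ccw_ne hab).2.1
    · exact hright c hc hbc
    obtain rfl | hc' := hleft c hc (R.ccw_ne hbc).2.1
    · exact hright a ha hca
    exact ht.not_all_right ⟨ha', hb', hc'⟩
  above a ha b hb hav hvb := by
    have ha' : R.ccw u v a := h a ha (hav.trans hvu).ne hav.ne
    by_contra hab
    obtain rfl | hbu := eq_or_ne b u
    · grind
    have hb' : R.ccw u v b := h b hb hbu hvb.ne'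
    have := R.second (a := a) (t := v) (b := b) (c := u)
    grind

theorem mono (hu : R.Exposed S u) (hTS : T ⊆ S) : R.Exposed T u where
  not_inTriangle a ha b hb c hc := hu.not_inTriangle a (hTS ha) b (hTS hb) c (hTS hc)
  above a ha b hb := hu.above a (hTS ha) b (hTS hb)

theorem clear_of_erase (hu : R.Exposed S u) (ha : a ∈ S) (hb : b ∈ S)
    (h : R.Clear (S.erase u) a b) : R.Clear S a b := fun x hx hax hxb => by
  obtain rfl | hxu := eq_or_ne x u
  exacts [hu.above a ha b hb hax hxb, h x (Finset.mem_erase.2 ⟨hxu, hx⟩) hax hxb]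

theorem hole5_of_erase (hu : R.Exposed S u) (h : R.Hole5 (S.erase u) a b c d e) :
    R.Hole5 S a b c d e := by
  have hm := h.mem
  simp only [Finset.mem_erase] at hm
  refine { h with mem := by tauto, empty := fun x hx hx5 => ?_ }
  obtain rfl | hxu := eq_or_ne x u
  · have h1 := hu.not_inTriangle a hm.1.2 b hm.2.1.2 c hm.2.2.1.2
    have h2 := hu.not_inTriangle a hm.1.2 c hm.2.2.1.2 d hm.2.2.2.1.2
    have h3 := hu.not_inTriangle a hm.1.2 d hm.2.2.2.1.2 e hm.2.2.2.2.2
    unfold InTriangle at *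
    grind
  · exact h.empty x (Finset.mem_erase.2 ⟨hxu, hx⟩) hx5

theorem hasClearCap_of_erase (hu : R.Exposed S u) (h : R.HasClearCap (S.erase u)) :
    R.HasClearCap S := by
  obtain ⟨a, b, c, d, h⟩ := h
  obtain ⟨ha, hb, hc, hd⟩ := h.mem
  obtain ⟨hab, hbc, hcd⟩ := h.clear
  have hsub := Finset.erase_subset u S
  exact ⟨a, b, c, d, ⟨hsub ha, hsub hb, hsub hc, hsub hd⟩, h.lt, h.cap,
    hu.clear_of_erase (hsub ha) (hsub hb) hab, hu.clear_of_erase (hsub hb) (hsub hc) hbc,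
    hu.clear_of_erase (hsub hc) (hsub hd) hcd⟩

theorem barren_erase (hu : R.Exposed S u) (hS : R.Barren S) : R.Barren (S.erase u) where
  not_hasHole5 := by
    rintro ⟨a, b, c, d, e, h⟩
    exact hS.not_hasHole5 ⟨a, b, c, d, e, hu.hole5_of_erase h⟩
  not_hasClearCap hcap := hS.not_hasClearCap (hu.hasClearCap_of_erase hcap)

end Exposed

end Configurations

section Mirror

variable {α : Type*} [LinearOrder α] (R : RadialSystem α) {S : Finset α} {a b c d e : α}

/-- The reflected system: all orientations and the angular order are reversed. -/
def mirror : RadialSystem αᵒᵈ where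
  ccw a b c := R.ccw (OrderDual.ofDual b) (OrderDual.ofDual a) (OrderDual.ofDual c)
  rotate h := R.rotate' h
  asymm h := R.asymm h
  total hab hbc hac := R.total hab.symm hac hbc
  first h1 h2 ha hb hc := R.rotate' (R.last (R.rotate h2) (R.rotate h1) hc hb ha)
  second h1 h2 ha hb hc := R.rotate (R.third (R.rotate' h2) (R.rotate' h1) hc hb ha)
  third h1 h2 ha hb hc := R.rotate (R.second (R.rotate' h2) (R.rotate' h1) hc hb ha)
  last h1 h2 ha hb hc := R.rotate' (R.first (R.rotate h2) (R.rotate h1) hc hb ha)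

variable {R}

theorem Hole3.mirror (h : R.Hole3 S a b c) : R.mirror.Hole3 (S : Finset αᵒᵈ) c b a where
  mem := by have := h.mem; tauto
  ccw := R.rotate h.ccw
  empty x hx hx3 := h.empty x hx ⟨hx3.2.1, hx3.1, hx3.2.2⟩

theorem Hole4.mirror (h : R.Hole4 S a b c d) : R.mirror.Hole4 (S : Finset αᵒᵈ) d c b a where
  mem := by have := h.mem; tauto
  abc := R.rotate h.bcd
  bcd := R.rotate h.abc
  cda := R.rotate h.dab
  dab := R.rotate h.cda
  empty x hx hx4 := h.empty x hx ⟨hx4.2.2.1, hx4.2.1, hx4.1, hx4.2.2.2⟩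

theorem Clear.of_mirror (h : R.mirror.Clear (S : Finset αᵒᵈ) b a) : R.Clear S a b :=
  fun x hx hax hxb => h x hx hxb hax

theorem Hole5.of_mirror (h : R.mirror.Hole5 (S : Finset αᵒᵈ) a b c d e) :
    R.Hole5 S e d c b a where
  mem := by have := h.mem; tauto
  abc := R.rotate' h.cde
  abd := R.rotate' h.bde
  abe := R.rotate' h.ade
  acd := R.rotate' h.bce
  ace := R.rotate' h.ace
  ade := R.rotate' h.abe
  bcd := R.rotate' h.bcd
  bce := R.rotate' h.acd
  bde := R.rotate' h.abd
  cde := R.rotate' h.abc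
  empty x hx hx5 := h.empty x hx ⟨hx5.2.2.2.1, hx5.2.2.1, hx5.2.1, hx5.1, hx5.2.2.2.2⟩

theorem Exposed.of_mirror (h : R.mirror.Exposed (S : Finset αᵒᵈ) a) : R.Exposed S a where
  not_inTriangle x hx y hy z hz h3 := h.not_inTriangle y hy x hx z hz ⟨h3.1, h3.2.2, h3.2.1⟩
  above x hx y hy hxa hay := h.above y hy x hx hay hxa

theorem Hole5.mirror (h : R.Hole5 S a b c d e) : R.mirror.Hole5 (S : Finset αᵒᵈ) e d c b a :=
  Hole5.of_mirror (R := R.mirror) h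

theorem ClearCap.of_mirror (h : R.mirror.ClearCap (S : Finset αᵒᵈ) a b c d) :
    R.ClearCap S d c b a where
  mem := by have := h.mem; tauto
  lt := ⟨h.lt.2.2, h.lt.2.1, h.lt.1⟩
  cap := ⟨R.rotate h.cap.2, R.rotate h.cap.1⟩
  clear := ⟨h.clear.2.2.of_mirror, h.clear.2.1.of_mirror, h.clear.1.of_mirror⟩

theorem Barren.mirror (h : R.Barren S) : R.mirror.Barren (S : Finset αᵒᵈ) where
  not_hasHole5 := by
    rintro ⟨a, b, c, d, e, h5⟩
    exact h.not_hasHole5 ⟨_, _, _, _, _, h5.of_mirror⟩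
  not_hasClearCap := by
    rintro ⟨a, b, c, d, hcap⟩
    exact h.not_hasClearCap ⟨_, _, _, _, hcap.of_mirror⟩

end Mirror

section Pinch

variable {α : Type*} [LinearOrder α] {R : RadialSystem α} {S : Finset α}
  {a b d e s t u v w y : α}

/-- `a < b` are neighbours in the order of `S`. -/
structure Consecutive (S : Finset α) (a b : α) : Prop where
  left_mem : a ∈ S
  right_mem : b ∈ S
  lt : a < b
  le_or_le : ∀ x ∈ S, x ≤ a ∨ b ≤ x

theorem exists_consecutive_left (hb : b ∈ S) (hy : y ∈ S) (hyb : y < b) :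
    ∃ a, Consecutive S a b := by
  obtain ⟨a, ha, hmax⟩ := (S.filter (· < b)).exists_max_image id ⟨y, by simp [hy, hyb]⟩
  simp only [Finset.mem_filter, id_eq] at ha hmax
  refine ⟨a, ha.1, hb, ha.2, fun x hx => ?_⟩
  have := hmax x
  grind

theorem Consecutive.mirror (h : Consecutive S a b) : Consecutive (α := αᵒᵈ) S b a :=
  ⟨h.right_mem, h.left_mem, h.lt, fun x hx => (h.le_or_le x hx).symm⟩

theorem exists_consecutive_right (ha : a ∈ S) (hy : y ∈ S) (hay : a < y) :
    ∃ b, Consecutive S a b :=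
  (exists_consecutive_left (α := αᵒᵈ) ha hy hay).imp fun _ h => h.mirror

theorem Consecutive.clear (h : Consecutive S a b) : R.Clear S a b := fun x hx hax hxb =>
  absurd (h.le_or_le x hx) (by grind)

theorem exists_clear_left (hy : y ∈ S) (hyt : y < t) (htw : t < w) (hcap : R.ccw t y w) :
    ∃ z ∈ S, z < t ∧ R.ccw t z w ∧ R.Clear S z t := by
  obtain ⟨z, hz, hmax⟩ := (S.filter fun z => z < t ∧ R.ccw t z w).exists_max_image id
    ⟨y, by simp [hy, hyt, hcap]⟩
  simp only [Finset.mem_filter, id_eq] at hz hmax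
  refine ⟨z, hz.1, hz.2.1, hz.2.2, fun x hx hzx hxt => ?_⟩
  by_contra hbelow
  have hzxt : R.ccw z x t := R.rotate (R.ccw_of_not hbelow hz.2.1.ne hxt.ne' hzx.ne)
  have hxtw : R.ccw x t w :=
    R.ccw_of_not (fun h => (hmax x ⟨hx, hxt, h⟩).not_gt hzx) hxt.ne' (hxt.trans htw).ne htw.ne
  exact R.asymm hz.2.2 (R.third hzxt hxtw hz.2.1 hxt htw)

theorem exists_clear_right (hy : y ∈ S) (hty : t < y) (hwt : w < t) (hcap : R.ccw t w y) :
    ∃ z ∈ S, t < z ∧ R.ccw t w z ∧ R.Clear S t z := by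
  obtain ⟨z, hz, htz, hcap', hclear⟩ :=
    exists_clear_left (R := R.mirror) (S := S) hy hty hwt (R.rotate' hcap)
  exact ⟨z, hz, htz, R.rotate hcap', hclear.of_mirror⟩

theorem Barren.not_clearCap (hS : R.Barren S) (ha : a ∈ S) (hb : b ∈ S) (hd : d ∈ S) (he : e ∈ S)
    (hab : a < b) (hbd : b < d) (hde : d < e) (h1 : R.ccw b a d) (h2 : R.ccw d b e)
    (hab' : R.Clear S a b) (hbd' : R.Clear S b d) (hde' : R.Clear S d e) : False :=
  hS.not_hasClearCap ⟨a, b, d, e, ⟨ha, hb, hd, he⟩, ⟨hab, hbd, hde⟩, ⟨h1, h2⟩, hab', hbd', hde'⟩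

variable (R S) in
/-- Every point of `S` before `b` lies on the same side of the line `e b` as `p`, and `e` is not the
first point of `S`. -/
structure LeftAnchored (e b : α) : Prop where
  mem : e ∈ S
  lt : e < b
  exists_lt : ∃ y ∈ S, y < e
  ccw : ∀ y ∈ S, y < b → y ≠ e → R.ccw b e y

variable (R S) in
/-- The mirror image of `LeftAnchored`. -/
structure RightAnchored (b d : α) : Prop where
  mem : d ∈ S
  lt : b < d
  exists_gt : ∃ y ∈ S, d < y
  ccw : ∀ y ∈ S, b < y → y ≠ d → R.ccw d b y

theorem RightAnchored.mirror (h : R.RightAnchored S b d) :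
    R.mirror.LeftAnchored S d b :=
  ⟨h.mem, h.lt, h.exists_gt, h.ccw⟩

theorem LeftAnchored.mirror (h : R.LeftAnchored S e b) :
    R.mirror.RightAnchored S b e :=
  ⟨h.mem, h.lt, h.exists_lt, h.ccw⟩

variable (R S) in
/-- A state of the infinite descent behind `Pinched.false`: an empty triangle `u v b` with `e < u`
that has the same orientations with every earlier point, while all points between `u` and `b` lie on
the same side of the line `u b` as `p`. -/
structure Staircase (e b u v : α) : Prop where
  lt : e < u
  lt' : u < b
  hole : R.Hole3 S u v b
  next : ∀ y ∈ S, y < u → R.ccw y u v ∧ R.ccw v b y ∧ R.ccw y u b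
  between : ∀ x ∈ S, u < x → x < b → R.ccw b u x

theorem Staircase.hole4 (h : R.Staircase S e b u v) (hs : Consecutive S t u) :
    R.Hole4 S b t u v := by
  obtain ⟨htuv, hvbt, htub⟩ := h.next t hs.left_mem hs.lt
  refine h.hole.rotate.rotate.insert
    ⟨⟨h.hole.mem.2.2, hs.left_mem, h.hole.mem.1⟩, R.rotate' htub, fun x hx hx3 => ?_⟩ hvbt htuv
  have hlt := hs.lt
  have hub := h.lt'
  have htx : t < x := by
    rcases hx3.exists_lt with h | h | h
    exacts [(hlt.trans hub).trans h, h, hlt.trans h]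
  have hxb : x < b := by
    rcases hx3.exists_gt with h | h | h
    exacts [h, h.trans (hlt.trans hub), h.trans hub]
  have hux : u < x := by
    have := (R.ccw_ne hx3.2.1).2.1
    have := hs.le_or_le x hx
    grind
  exact R.asymm hx3.2.2 (h.between x hx hux hxb)

theorem Staircase.pred (hS : R.Barren S) (h : R.Staircase S e b u v) (hs : Consecutive S t u)
    (hy : y ∈ S) (hyt : y < t) : R.ccw y t b ∧ R.ccw t y u := by
  have hyu := hyt.trans hs.lt
  have htb := hs.lt.trans h.lt'
  have h4 := h.hole4 hs
  obtain ⟨hyuv, hvby, hyub⟩ := h.next y hy hyu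
  have hcap : R.ccw t y u := by
    by_contra hcup
    have hytu : R.ccw y t u := R.ccw_of_not hcup hyt.ne' hyu.ne hs.lt.ne
    have hytb : R.ccw y t b := R.first hytu hyub hyt hyu (hyt.trans htb)
    exact h4.not_wedge hS.not_hasHole5 hy (R.rotate' hytb) hvby hytu
  refine ⟨?_, hcap⟩
  by_contra hytb
  have : R.ccw b t y := R.rotate' (R.ccw_of_not hytb hyt.ne htb.ne (hyt.trans htb).ne)
  exact h4.rotate.not_wedge hS.not_hasHole5 hy hcap this hyuv

theorem Staircase.lt_pred (hS : R.Barren S) (he : R.LeftAnchored S e b)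
    (h : R.Staircase S e b u v) (hs : Consecutive S t u) : e < t := by
  obtain ⟨y, hy, hye⟩ := he.exists_lt
  refine ((hs.le_or_le e he.mem).resolve_right h.lt.not_ge).lt_of_ne fun het => ?_
  subst het
  exact R.asymm (h.pred hS hs hy hye).1 (R.rotate (he.ccw y hy (hye.trans he.lt) hye.ne))

theorem Staircase.ccw_pred_pred (hS : R.Barren S) (h : R.Staircase S e b u v)
    (hs : Consecutive S s u) (ht : Consecutive S t s) (hy : y ∈ S) (hyt : y < t) :
    R.ccw y t s := by
  by_contra hcap
  obtain ⟨z, hz, hzt, hzts, hclear⟩ := exists_clear_left hy hyt ht.lt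
    (R.ccw_of_not hcap hyt.ne ht.lt.ne (hyt.trans ht.lt).ne)
  exact hS.not_clearCap hz ht.left_mem hs.left_mem hs.right_mem hzt ht.lt hs.lt hzts
    (h.pred hS hs ht.left_mem ht.lt).2 hclear ht.clear hs.clear

theorem Staircase.lt_pred_pred (hS : R.Barren S) (he : R.LeftAnchored S e b)
    (h : R.Staircase S e b u v) (hs : Consecutive S s u) (ht : Consecutive S t s) : e < t := by
  obtain ⟨y, hy, hye⟩ := he.exists_lt
  have hsb := hs.lt.trans h.lt'
  refine ((ht.le_or_le e he.mem).resolve_right (h.lt_pred hS he hs).not_ge).lt_of_ne fun het => ?_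
  subst het
  have hyeb : R.ccw y e b := R.second (h.ccw_pred_pred hS hs ht hy hye)
    (R.rotate (he.ccw s hs.left_mem hsb ht.lt.ne')) hye ht.lt he.lt
  exact R.asymm hyeb (R.rotate (he.ccw y hy (hye.trans he.lt) hye.ne))

theorem Consecutive.forall_ccw (hs : Consecutive S s u) (hub : u < b) (hsub : R.ccw s u b)
    (h : ∀ x ∈ S, u < x → x < b → R.ccw b u x) : ∀ x ∈ S, s < x → x < b → R.ccw b s x := by
  intro x hx hsx hxb
  obtain rfl | hux := ((hs.le_or_le x hx).resolve_left hsx.not_ge).eq_or_lt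
  · exact R.rotate' hsub
  · exact R.last (R.rotate' hsub) (h x hx hux hxb) (hs.lt.trans hub) hub hxb

theorem Consecutive.hole3 (ht : Consecutive S t s) (hb : b ∈ S) (hsb : s < b)
    (htsb : R.ccw t s b) (h : ∀ x ∈ S, s < x → x < b → R.ccw b s x) : R.Hole3 S t s b := by
  refine ⟨⟨ht.left_mem, ht.right_mem, hb⟩, htsb, fun x hx hx3 => ?_⟩
  have hlt := ht.lt
  have htx : t < x := by
    rcases hx3.exists_lt with h | h | h
    exacts [h, hlt.trans h, (hlt.trans hsb).trans h]
  have hxb : x < b := by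
    rcases hx3.exists_gt with h | h | h
    exacts [h.trans (hlt.trans hsb), h.trans hsb, h]
  have hsx : s < x :=
    ((ht.le_or_le x hx).resolve_left htx.not_ge).lt_of_ne (R.ccw_ne hx3.2.1).2.2
  exact R.asymm (h x hx hsx hxb) hx3.2.1

theorem Staircase.step (hS : R.Barren S) (he : R.LeftAnchored S e b) (h : R.Staircase S e b u v) :
    ∃ t s, t < u ∧ R.Staircase S e b t s := by
  obtain ⟨s, hs⟩ := exists_consecutive_left h.hole.mem.1 he.mem h.lt
  obtain ⟨t, ht⟩ := exists_consecutive_left hs.left_mem he.mem (h.lt_pred hS he hs)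
  have hsb := hs.lt.trans h.lt'
  have htsb : R.ccw t s b := (h.pred hS hs ht.left_mem ht.lt).1
  have hsub : R.ccw s u b := (h.next s hs.left_mem hs.lt).2.2
  have hbetween := hs.forall_ccw h.lt' hsub h.between
  refine ⟨t, s, ht.lt.trans hs.lt, h.lt_pred_pred hS he hs ht, ht.lt.trans hsb,
    ht.hole3 h.hole.mem.2.2 hsb htsb hbetween, fun y hy hyt => ?_,
    ht.forall_ccw hsb htsb hbetween⟩
  have hyts : R.ccw y t s := h.ccw_pred_pred hS hs ht hy hyt
  exact ⟨hyts, R.rotate (h.pred hS hs hy (hyt.trans ht.lt)).1,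
    R.second hyts htsb hyt ht.lt (ht.lt.trans hsb)⟩

theorem Staircase.false (hS : R.Barren S) (he : R.LeftAnchored S e b)
    (h : R.Staircase S e b u v) : False := by
  induction hn : (S.filter (· < u)).card using Nat.strong_induction_on generalizing u v with
  | _ n ih =>
    obtain ⟨t, s, htu, hts⟩ := h.step hS he
    refine ih _ ?_ hts rfl
    rw [← hn]
    refine Finset.card_lt_card ((Finset.ssubset_iff_of_subset fun x hx => ?_).2 ⟨t, ?_, ?_⟩)
    · have := hts.hole.mem.1
      grind
    · simp [hts.hole.mem.1, htu]
    · simp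

end Pinch

section Pinched

variable {α : Type*} [LinearOrder α] {R : RadialSystem α} {S : Finset α} {b d e q q' y : α}

variable (R S) in
/-- A point `b` anchored at `e` on the left and at `d` on the right that lies beyond, as seen from
`p`, the segment from each anchor to the neighbour of `b` on the other side. -/
structure Pinched (e q b q' d : α) : Prop where
  left : R.LeftAnchored S e b
  right : R.RightAnchored S b d
  prev : Consecutive S q b
  next : Consecutive S b q'
  cap_left : q' = d ∨ R.ccw b e q'
  cap_right : q = e ∨ R.ccw d b q
  ne : q ≠ e ∨ q' ≠ d

theorem Pinched.mirror (h : R.Pinched S e q b q' d) :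
    R.mirror.Pinched (S : Finset αᵒᵈ) d q' b q e where
  left := h.right.mirror
  right := h.left.mirror
  prev := h.next.mirror
  next := h.prev.mirror
  cap_left := h.cap_right
  cap_right := h.cap_left
  ne := h.ne.symm

theorem Pinched.prev_ne (hS : R.Barren S) (h : R.Pinched S e q b q' d) : q ≠ e := by
  rintro rfl
  have hcap : R.ccw b q q' := h.cap_left.resolve_left (h.ne.resolve_left (· rfl))
  obtain ⟨y, hy, hyq⟩ := h.left.exists_lt
  obtain ⟨z, hz, hzq, hzcap, hclear⟩ := exists_clear_left hy hyq h.left.lt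
    (R.rotate (h.left.ccw y hy (hyq.trans h.left.lt) hyq.ne))
  exact hS.not_clearCap hz h.prev.left_mem h.prev.right_mem h.next.right_mem hzq h.prev.lt
    h.next.lt hzcap hcap hclear h.prev.clear h.next.clear

theorem Pinched.next_ne (hS : R.Barren S) (h : R.Pinched S e q b q' d) : q' ≠ d :=
  Pinched.prev_ne (α := αᵒᵈ) hS.mirror h.mirror

theorem Pinched.ccw_prev_next (hS : R.Barren S) (h : R.Pinched S e q b q' d) : R.ccw b q q' := by
  have hqe := h.prev_ne hS
  have hcap := h.cap_left.resolve_left (h.next_ne hS)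
  refine R.ccw_of_not (fun hcup => ?_) h.prev.lt.ne h.next.lt.ne (h.prev.lt.trans h.next.lt).ne
  have heqb : R.ccw e q b := R.rotate (h.left.ccw q h.prev.left_mem h.prev.lt hqe)
  exact R.asymm hcap (R.third heqb hcup h.left.lt h.prev.lt h.next.lt)

theorem Pinched.ccw_of_lt_prev (hS : R.Barren S) (h : R.Pinched S e q b q' d) (hy : y ∈ S)
    (hyq : y < q) : R.ccw y q b := by
  by_contra hcap
  obtain ⟨z, hz, hzq, hzcap, hclear⟩ := exists_clear_left hy hyq h.prev.lt
    (R.ccw_of_not hcap hyq.ne h.prev.lt.ne (hyq.trans h.prev.lt).ne)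
  exact hS.not_clearCap hz h.prev.left_mem h.prev.right_mem h.next.right_mem hzq h.prev.lt
    h.next.lt hzcap (h.ccw_prev_next hS) hclear h.prev.clear h.next.clear

theorem Pinched.eq_of_between (h : R.Pinched S e q b q' d) (hy : y ∈ S) (hqy : q < y)
    (hyq' : y < q') : y = b :=
  le_antisymm ((h.next.le_or_le y hy).resolve_right hyq'.not_ge)
    ((h.prev.le_or_le y hy).resolve_left hqy.not_ge)

theorem Pinched.hole3 (hS : R.Barren S) (h : R.Pinched S e q b q' d) : R.Hole3 S q q' b where
  mem := ⟨h.prev.left_mem, h.next.right_mem, h.prev.right_mem⟩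
  ccw := R.rotate (h.ccw_prev_next hS)
  empty x hx hx3 := by
    have hqx : q < x := by
      rcases hx3.exists_lt with hlt | hlt | hlt
      exacts [hlt, (h.prev.lt.trans h.next.lt).trans hlt, h.prev.lt.trans hlt]
    have hxq' : x < q' := by
      rcases hx3.exists_gt with hlt | hlt | hlt
      exacts [hlt.trans (h.prev.lt.trans h.next.lt), hlt, hlt.trans h.next.lt]
    exact (R.ccw_ne hx3.2.1).2.1 (h.eq_of_between hx hqx hxq').symm

theorem Pinched.exists_not_ccw (hS : R.Barren S) (h : R.Pinched S e q b q' d) :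
    ∃ y ∈ S, y < q ∧ ¬ R.ccw y q q' := by
  by_contra! hcup
  have heq : e < q :=
    ((h.prev.le_or_le e h.left.mem).resolve_right h.left.lt.not_ge).lt_of_ne (h.prev_ne hS).symm
  have hcap := h.cap_left.resolve_left (h.next_ne hS)
  refine Staircase.false hS h.left ⟨heq, h.prev.lt, h.hole3 hS, fun y hy hyq =>
    ⟨hcup y hy hyq, ?_, h.ccw_of_lt_prev hS hy hyq⟩, fun x hx hqx hxb =>
      absurd (h.prev.le_or_le x hx) (by grind)⟩
  have hyb := hyq.trans h.prev.lt
  obtain rfl | hye := eq_or_ne y e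
  · exact R.rotate' hcap
  refine R.rotate' (R.ccw_of_not (fun hyb' => ?_) hyb.ne h.next.lt.ne (hyb.trans h.next.lt).ne)
  exact R.asymm hcap
    (R.third (R.rotate (h.left.ccw y hy hyb hye)) hyb' h.left.lt hyb h.next.lt)

theorem Pinched.false (hS : R.Barren S) (h : R.Pinched S e q b q' d) : False := by
  have hqq' := h.prev.lt.trans h.next.lt
  obtain ⟨y, hy, hyq, hcap⟩ := h.exists_not_ccw hS
  obtain ⟨y', hy', hyq', hcap'⟩ : ∃ y ∈ S, q' < y ∧ ¬ R.ccw q' y q :=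
    Pinched.exists_not_ccw (α := αᵒᵈ) hS.mirror h.mirror
  obtain ⟨z, hz, hzq, hzcap, hclear⟩ := exists_clear_left hy hyq hqq'
    (R.ccw_of_not hcap hyq.ne hqq'.ne (hyq.trans hqq').ne)
  obtain ⟨z', hz', hzq', hzcap', hclear'⟩ := exists_clear_right hy' hyq' hqq'
    (R.ccw_of_not (fun hcup => hcap' (R.rotate hcup)) hqq'.ne hyq'.ne (hqq'.trans hyq').ne)
  refine hS.not_clearCap hz h.prev.left_mem h.next.right_mem hz' hzq hqq' hzq' hzcap hzcap' hclear
    (fun x hx hqx hxq' => ?_) hclear'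
  obtain rfl := h.eq_of_between hx hqx hxq'
  exact R.rotate (h.ccw_prev_next hS)

end Pinched

section PinchedEdge

variable {α : Type*} [LinearOrder α] {R : RadialSystem α} {S : Finset α} {a b s x y z : α}

variable (R S) in
/-- As seen from `p`, both `a` and `b` lie beyond every segment that joins a point outside the
angular range from `a` to `b` to a point within it, and `ab` lies beyond the points within the
range. By `exists_two`, one of the three parts into which `a` and `b` cut `S` has at least two
points. -/
structure PinchedEdge (a b : α) : Prop where
  mem : a ∈ S ∧ b ∈ S
  lt : a < b
  left : ∀ x ∈ S, x < a → ∀ y ∈ S, a < y → y ≤ b → R.ccw a x y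
  right : ∀ x ∈ S, b < x → ∀ y ∈ S, a ≤ y → y < b → R.ccw b y x
  below : ∀ x ∈ S, a < x → x < b → R.ccw a x b
  exists_lt : ∃ x ∈ S, x < a
  exists_between : ∃ x ∈ S, a < x ∧ x < b
  exists_gt : ∃ x ∈ S, b < x
  exists_two : ∃ x ∈ S, ∃ y ∈ S, x < y ∧ (y < a ∨ a < x ∧ y < b ∨ b < x)

namespace PinchedEdge

theorem mirror (h : R.PinchedEdge S a b) : R.mirror.PinchedEdge (S : Finset αᵒᵈ) b a where
  mem := h.mem.symm
  lt := h.lt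
  left x hx hbx y hy hyb hay := R.rotate' (h.right x hx hbx y hy hay hyb)
  right x hx hxa y hy hyb hay := R.rotate' (h.left x hx hxa y hy hay hyb)
  below x hx hxb hax := R.rotate (h.below x hx hax hxb)
  exists_lt := h.exists_gt
  exists_between := h.exists_between.imp fun _ hx => ⟨hx.1, hx.2.symm⟩
  exists_gt := h.exists_lt
  exists_two := by
    obtain ⟨x, hx, y, hy, hxy, hcases⟩ := h.exists_two
    exact ⟨y, hy, x, hx, hxy, hcases.elim (fun h => .inr (.inr h)) fun h =>
      h.elim (fun h => .inr (.inl h.symm)) .inl⟩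

theorem ccw (h : R.PinchedEdge S a b) (hx : x ∈ S) (hxb : x ≠ b) (hxa : x ≠ a) : R.ccw b a x := by
  rcases hxa.lt_or_gt with hlt | hax
  · exact R.rotate' (h.left x hx hlt b h.mem.2 h.lt le_rfl)
  rcases hxb.lt_or_gt with hlt | hbx
  · exact R.rotate' (h.below x hx hax hlt)
  · exact h.right x hx hbx a h.mem.1 le_rfl h.lt

theorem exposed_right (h : R.PinchedEdge S a b) : R.Exposed S b :=
  .tail_of_edge h.lt fun _ => h.ccw

theorem eq_left_of_solitary (hyb : y < b) (honly : ∀ x ∈ S, a < x → x < b → x = y)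
    (hs : Consecutive S s a) (hx : x ∈ S) (hsx : s < x) (hxy : x < y) : x = a :=
  ((hs.le_or_le x hx).resolve_left hsx.not_ge).eq_of_not_lt' fun hax =>
    hxy.ne (honly x hx hax (hxy.trans hyb))

theorem hole4_of_solitary (h : R.PinchedEdge S a b) (h3 : R.Hole3 S a y b) (hay : a < y)
    (hyb : y < b) (honly : ∀ x ∈ S, a < x → x < b → x = y) (hs : Consecutive S s a)
    (hsyb : R.ccw s y b) : R.Hole4 S a s y b := by
  obtain ⟨ha, hy, -⟩ := h3.mem
  have hsy := hs.lt.trans hay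
  refine h3.insert ⟨⟨ha, hs.left_mem, hy⟩, h.left s hs.left_mem hs.lt y hy hay hyb.le,
    fun x hx hx3 => ?_⟩ (h.ccw hs.left_mem (hsy.trans hyb).ne hs.lt.ne) hsyb
  have hsx : s < x := by
    rcases hx3.exists_lt with hlt | hlt | hlt
    exacts [hs.lt.trans hlt, hlt, hsy.trans hlt]
  have hxy : x < y := by
    rcases hx3.exists_gt with hlt | hlt | hlt
    exacts [hlt.trans hay, hlt.trans hsy, hlt]
  exact (R.ccw_ne hx3.1).2.2 (eq_left_of_solitary hyb honly hs hx hsx hxy).symm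

theorem false_of_two_left (hS : R.Barren S) (h : R.PinchedEdge S a b) (h3 : R.Hole3 S a y b)
    (hay : a < y) (hyb : y < b) (honly : ∀ x ∈ S, a < x → x < b → x = y)
    (hx : x ∈ S) (hz : z ∈ S) (hxz : x < z) (hza : z < a) : False := by
  obtain ⟨ha, hy, hb⟩ := h3.mem
  obtain ⟨s, hs⟩ := exists_consecutive_left ha hz hza
  obtain ⟨r, hr⟩ := exists_consecutive_left hs.left_mem hx
    (hxz.trans_le ((hs.le_or_le z hz).resolve_right hza.not_ge))
  obtain ⟨w₀, hw₀, hbw₀⟩ := h.exists_gt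
  obtain ⟨w, hw⟩ := exists_consecutive_right hb hw₀ hbw₀
  have hsy := hs.lt.trans hay
  have hasy : R.ccw a s y := h.left s hs.left_mem hs.lt y hy hay hyb.le
  have hbyw : R.ccw b y w := h.right w hw.right_mem hw.lt y hy hay.le hyb
  have clear_sy : R.Clear S s y := fun x hx hsx hxy =>
    eq_left_of_solitary hyb honly hs hx hsx hxy ▸ R.rotate hasy
  have clear_yw : R.Clear S y w := fun x hx hyx hxw => by
    obtain rfl : x = b := ((hw.le_or_le x hx).resolve_right hxw.not_ge).eq_of_not_lt fun hxb =>
      hyx.ne' (honly x hx (hay.trans hyx) hxb)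
    exact R.rotate hbyw
  have hsyb : R.ccw s y b := by
    refine R.ccw_of_not (fun hcap => ?_) hsy.ne' (hsy.trans hyb).ne hyb.ne
    exact hS.not_clearCap hs.left_mem hy hb hw.right_mem hsy hyb hw.lt hcap hbyw clear_sy
      (fun x hx hyx hxb => absurd (honly x hx (hay.trans hyx) hxb) hyx.ne') hw.clear
  have h4 : R.Hole4 S a s y b := h.hole4_of_solitary h3 hay hyb honly hs hsyb
  have hcap : R.ccw s r y := by
    refine R.ccw_of_not (fun hcup => ?_) hr.lt.ne hsy.ne (hr.lt.trans hsy).ne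
    have hra := hr.lt.trans hs.lt
    have hary : R.ccw a r y := h.left r hr.left_mem hra y hy hay hyb.le
    have hars : R.ccw a r s :=
      R.rotate' (R.first hcup (R.rotate hary) hr.lt (hra.trans hay) hra)
    exact h4.not_wedge hS.not_hasHole5 hr.left_mem hars
      (h.ccw hr.left_mem (hra.trans h.lt).ne hra.ne) hcup
  have hcap' : R.ccw y s w := by
    refine R.ccw_of_not (fun hcup => ?_) hsy.ne (hyb.trans hw.lt).ne
      (hsy.trans (hyb.trans hw.lt)).ne
    exact h4.rotate.rotate.not_wedge hS.not_hasHole5 hw.right_mem (R.rotate hbyw) hcup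
      (R.rotate' (h.right w hw.right_mem hw.lt a ha le_rfl h.lt))
  exact hS.not_clearCap hr.left_mem hs.left_mem hy hw.right_mem hr.lt hsy (hyb.trans hw.lt)
    hcap hcap' hr.clear clear_sy clear_yw

theorem not_solitary (hS : R.Barren S) (h : R.PinchedEdge S a b) (h3 : R.Hole3 S a y b)
    (hay : a < y) (hyb : y < b) : ∃ x ∈ S, a < x ∧ x < b ∧ x ≠ y := by
  by_contra! honly
  obtain ⟨x, hx, z, hz, hxz, hlt | ⟨hax, hzb⟩ | hlt⟩ := h.exists_two
  · exact h.false_of_two_left hS h3 hay hyb honly hx hz hxz hlt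
  · exact hxz.ne ((honly x hx hax (hxz.trans hzb)).trans
      (honly z hz (hax.trans hxz) hzb).symm)
  · exact h.mirror.false_of_two_left hS.mirror h3.mirror hyb hay
      (fun x hx hax hxb => honly x hx hxb hax) hz hx hxz hlt

theorem exists_not_below (hS : R.Barren S) (h : R.PinchedEdge S a b) (h3 : R.Hole3 S a y b)
    (hay : a < y) (hyb : y < b) :
    ∃ x ∈ S, a < x ∧ x < b ∧ x ≠ y ∧ ¬ (R.ccw y a x ∧ R.ccw b y x) := by
  by_contra! hbelow
  obtain ⟨ha, hy, hb⟩ := h3.mem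
  obtain ⟨q, hq⟩ := exists_consecutive_left hy ha hay
  obtain ⟨q', hq'⟩ := exists_consecutive_right hy hb hyb
  obtain ⟨x, hx, hax, hxb, hxy⟩ := h.not_solitary hS h3 hay hyb
  have haq : a ≤ q := (hq.le_or_le a ha).resolve_right hay.not_ge
  have hqb : q' ≤ b := (hq'.le_or_le b hb).resolve_left hyb.not_ge
  refine Pinched.false hS (e := a) (q := q) (b := y) (q' := q') (d := b)
    ⟨⟨ha, hay, h.exists_lt, fun w hw hwy hwa => ?_⟩, ⟨hb, hyb, h.exists_gt, fun w hw hyw hwb => ?_⟩,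
      hq, hq', ?_, ?_, ?_⟩
  · rcases hwa.lt_or_gt with hwa | haw
    exacts [R.rotate' (h.left w hw hwa y hy hay hyb.le), (hbelow w hw haw (hwy.trans hyb) hwy.ne).1]
  · rcases hwb.lt_or_gt with hwb | hbw
    exacts [(hbelow w hw (hay.trans hyw) hwb hyw.ne').2, h.right w hw hbw y hy hay.le hyb]
  · exact hqb.eq_or_lt.imp_right fun hlt =>
      (hbelow q' hq'.right_mem (hay.trans hq'.lt) hlt hq'.lt.ne').1
  · exact haq.eq_or_lt'.imp_right fun hlt => (hbelow q hq.left_mem hlt (hq.lt.trans hyb) hq.lt.ne).2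
  · rcases hxy.lt_or_gt with hxy | hyx
    · exact .inl (hax.trans_le ((hq.le_or_le x hx).resolve_right hxy.not_ge)).ne'
    · exact .inr (((hq'.le_or_le x hx).resolve_left hyx.not_ge).trans_lt hxb).ne

theorem exists_hole3 (h : R.PinchedEdge S a b) : ∃ y, R.Hole3 S a y b ∧ a < y ∧ y < b := by
  obtain ⟨m, hm, ham, hmb⟩ := h.exists_between
  obtain ⟨y, hy, h3⟩ := RadialSystem.exists_hole3 h.mem.1 hm h.mem.2 (h.below m hm ham hmb)
  refine ⟨y, h3, ?_⟩
  rcases hy with rfl | hy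
  · exact ⟨ham, hmb⟩
  · exact ⟨hy.exists_lt.elim id (·.elim ham.trans h.lt.trans),
      hy.exists_gt.elim h.lt.trans' (·.elim hmb.trans' id)⟩

theorem hole4_of_left (h : R.PinchedEdge S a b) (h3 : R.Hole3 S a y b) (hay : a < y) (hyb : y < b)
    (hx : x ∈ S) (hxb : x < b) (hyax : R.ccw y a x) (hybx : R.ccw y b x) (hax : a < x) :
    ∃ z, a < z ∧ z < y ∧ R.Hole4 S a z y b := by
  have hxy : x < y := by
    refine (R.ccw_ne hyax).2.2.lt_of_le' (le_of_not_gt fun hyx => ?_)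
    exact R.asymm (R.third hyax (h.below x hx hax hxb) hyx hax hxb) (R.rotate' hybx)
  obtain ⟨z, hz, hz3⟩ := RadialSystem.exists_hole3 h3.mem.1 hx h3.mem.2.1 (R.rotate hyax)
  have haz : a < z := by
    rcases hz with rfl | hz
    exacts [hax, hz.exists_lt.elim id (·.elim hax.trans hay.trans)]
  have hzy : z < y := by
    rcases hz with rfl | hz
    exacts [hxy, hz.exists_gt.elim hay.trans' (·.elim hxy.trans' id)]
  have hzyb : R.ccw z y b := by
    rcases hz with rfl | hz
    exacts [R.rotate' hybx, hz.ccw_right h3.ccw (R.rotate' hybx)]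
  exact ⟨z, haz, hzy, h3.insert hz3 (h.ccw hz3.mem.2.1 (hzy.trans hyb).ne haz.ne') hzyb⟩

end PinchedEdge

variable (R S) in
/-- A pinched edge `ab` that is a side of an empty quadrilateral with its other two vertices within
the angular range from `a` to `b`. -/
structure PinchedQuad (a z y b : α) : Prop where
  edge : R.PinchedEdge S a b
  hole : R.Hole4 S a z y b
  lt : a < z ∧ z < y ∧ y < b

theorem PinchedQuad.mirror (h : R.PinchedQuad S a z y b) :
    R.mirror.PinchedQuad (S : Finset αᵒᵈ) b y z a :=
  ⟨h.edge.mirror, h.hole.mirror, h.lt.2.2, h.lt.2.1, h.lt.1⟩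

theorem PinchedEdge.exists_pinchedQuad (hS : R.Barren S) (h : R.PinchedEdge S a b) :
    ∃ z y, R.PinchedQuad S a z y b := by
  obtain ⟨y, h3, hay, hyb⟩ := h.exists_hole3
  obtain ⟨x, hx, hax, hxb, hxy, hnot⟩ := h.exists_not_below hS h3 hay hyb
  by_cases hyax : R.ccw y a x
  · have hybx : R.ccw y b x := R.ccw_of_not (fun hbyx => hnot ⟨hyax, hbyx⟩) hyb.ne' hxy.symm hxb.ne'
    obtain ⟨z, haz, hzy, h4⟩ := h.hole4_of_left h3 hay hyb hx hxb hyax hybx hax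
    exact ⟨z, y, h, h4, haz, hzy, hyb⟩
  · have hayx : R.ccw a y x := R.ccw_of_not hyax hay.ne' hax.ne hxy.symm
    have hbyx : R.ccw b y x := R.ccw_of_not
      (fun hybx => h3.empty x hx ⟨hayx, hybx, h.ccw hx hxb.ne hax.ne'⟩) hyb.ne hxb.ne' hxy.symm
    obtain ⟨z, hbz, hzy, h4⟩ : ∃ z, z < b ∧ y < z ∧ R.mirror.Hole4 (S : Finset αᵒᵈ) b z y a :=
      h.mirror.hole4_of_left h3.mirror hyb hay hx hax hbyx hayx hxb
    exact ⟨y, z, h, h4.mirror, hay, hzy, hbz⟩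

theorem Consecutive.mono {T : Finset α} (h : Consecutive S a b) (hTS : T ⊆ S) (ha : a ∈ T)
    (hb : b ∈ T) : Consecutive T a b :=
  ⟨ha, hb, h.lt, fun x hx => h.le_or_le x (hTS hx)⟩

namespace PinchedQuad

theorem ccw_of_lt (hS : R.Barren S) (h : R.PinchedQuad S a z y b) (hx : x ∈ S) (hxz : x < z)
    (hxa : x ≠ a) : R.ccw z x y := by
  obtain ⟨haz, hzy, hyb⟩ := h.lt
  refine R.ccw_of_not (fun hcup => ?_) hxz.ne hzy.ne (hxz.trans hzy).ne
  have hxb := hxz.trans (hzy.trans hyb)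
  have hbax := h.edge.ccw hx hxb.ne hxa
  by_cases haxz : R.ccw a x z
  · exact h.hole.not_wedge hS.not_hasHole5 hx haxz hbax hcup
  · have hxyb : R.ccw x y b := R.third hcup h.hole.bcd (hxz.trans hzy) hzy hyb
    exact h.hole.empty x hx ⟨R.rotate (R.ccw_of_not haxz hxa.symm hxz.ne haz.ne), R.rotate hcup,
      R.rotate hxyb, hbax⟩

theorem ccw_of_gt (hS : R.Barren S) (h : R.PinchedQuad S a z y b) (hx : x ∈ S) (hyx : y < x)
    (hxb : x ≠ b) : R.ccw y z x :=
  R.rotate (PinchedQuad.ccw_of_lt (α := αᵒᵈ) hS.mirror h.mirror hx hyx hxb)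

theorem ccw_of_between (h : R.PinchedQuad S a z y b) (hx : x ∈ S) (hzx : z < x)
    (hxy : x < y) : R.ccw y z x := by
  obtain ⟨haz, hzy, hyb⟩ := h.lt
  refine R.ccw_of_not (fun hcap => ?_) hzy.ne hxy.ne' hzx.ne
  have hazx : R.ccw a z x := R.second h.hole.abc hcap haz hzy hzx
  have hxyb : R.ccw x y b := R.third (R.rotate' hcap) h.hole.bcd hxy hzy hyb
  exact h.hole.empty x hx ⟨hazx, hcap, R.rotate hxyb,
    h.edge.ccw hx (hxy.trans hyb).ne (haz.trans hzx).ne'⟩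

theorem exists_between (hS : R.Barren S) (h : R.PinchedQuad S a z y b) :
    ∃ x ∈ S, z < x ∧ x < y := by
  by_contra! hnone
  obtain ⟨haz, hzy, hyb⟩ := h.lt
  obtain ⟨u, hu, hua⟩ := h.edge.exists_lt
  obtain ⟨w, hw, hbw⟩ := h.edge.exists_gt
  obtain ⟨u', hu', huz, hcap, hclear⟩ := exists_clear_left hu (hua.trans haz) hzy
    (h.ccw_of_lt hS hu (hua.trans haz) hua.ne)
  obtain ⟨w', hw', hyw, hcap', hclear'⟩ := exists_clear_right hw (hyb.trans hbw) hzy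
    (h.ccw_of_gt hS hw (hyb.trans hbw) hbw.ne')
  exact hS.not_clearCap hu' h.hole.mem.2.1 h.hole.mem.2.2.1 hw' huz hzy hyw hcap hcap' hclear
    (fun x hx hzx hxy => absurd hxy (hnone x hx hzx).not_gt) hclear'

theorem ccw_succ (hS : R.Barren S) (h : R.PinchedQuad S a z y b) {t : α}
    (ht : Consecutive S z t) : R.ccw a z t := by
  obtain ⟨haz, hzy, hyb⟩ := h.lt
  obtain ⟨x, hx, hzx, hxy⟩ := h.exists_between hS
  have hty : t < y := ((ht.le_or_le x hx).resolve_left hzx.not_ge).trans_lt hxy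
  by_contra hcap
  have hzat : R.ccw z a t := R.ccw_of_not hcap haz.ne ht.lt.ne (haz.trans ht.lt).ne
  have mem_erase : ∀ w ∈ S, w ≠ b → w ∈ S.erase b := fun w hw hwb => Finset.mem_erase.2 ⟨hwb, hw⟩
  have ha := mem_erase a h.edge.mem.1 (haz.trans (hzy.trans hyb)).ne
  have hz := mem_erase z h.hole.mem.2.1 (hzy.trans hyb).ne
  obtain ⟨u, hu, hua⟩ := h.edge.exists_lt
  obtain ⟨w, hw, hbw⟩ := h.edge.exists_gt
  obtain ⟨q, hq⟩ := exists_consecutive_left hz ha haz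
  refine Pinched.false (h.edge.exposed_right.barren_erase hS)
    ⟨⟨ha, haz, ⟨u, mem_erase u hu (hua.trans h.edge.lt).ne, hua⟩, fun v hv hvz hva => ?_⟩,
      ⟨mem_erase y h.hole.mem.2.2.1 hyb.ne, hzy, ⟨w, mem_erase w hw hbw.ne', hyb.trans hbw⟩,
        fun v hv hzv hvy => ?_⟩,
      hq, ht.mono (Finset.erase_subset b S) hz (mem_erase t ht.right_mem (hty.trans hyb).ne),
      .inr hzat, ?_, .inr hty.ne⟩
  · have hvS := Finset.mem_of_mem_erase hv
    rcases hva.lt_or_gt with hva | hav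
    · exact R.rotate' (h.edge.left v hvS hva z h.hole.mem.2.1 haz (hzy.trans hyb).le)
    · refine R.ccw_of_not (fun hazv => ?_) haz.ne hvz.ne' hav.ne
      exact R.asymm (h.ccw_of_lt hS hvS hvz hva)
        (R.third (R.rotate' hazv) h.hole.abc hvz haz hzy)
  · have hvS := Finset.mem_of_mem_erase hv
    rcases hvy.lt_or_gt with hvy | hyv
    · exact h.ccw_of_between hvS hzv hvy
    · exact h.ccw_of_gt hS hvS hyv (Finset.ne_of_mem_erase hv)
  · exact or_iff_not_imp_left.2 fun hqa => R.rotate'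
      (h.ccw_of_lt hS (Finset.mem_of_mem_erase hq.left_mem) hq.lt hqa)

theorem ccw_pred (hS : R.Barren S) (h : R.PinchedQuad S a z y b) {t : α}
    (ht : Consecutive S t y) : R.ccw t y b :=
  R.rotate' (PinchedQuad.ccw_succ (α := αᵒᵈ) hS.mirror h.mirror ht.mirror)

theorem false (hS : R.Barren S) (h : R.PinchedQuad S a z y b) : False := by
  obtain ⟨haz, -, hyb⟩ := h.lt
  obtain ⟨x, hx, hzx, hxy⟩ := h.exists_between hS
  obtain ⟨t₀, ht₀⟩ := exists_consecutive_right h.hole.mem.2.1 hx hzx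
  obtain ⟨t₁, ht₁⟩ := exists_consecutive_left h.hole.mem.2.2.1 hx hxy
  have ht₀y := ((ht₀.le_or_le x hx).resolve_left hzx.not_ge).trans_lt hxy
  have hzt₁ := hzx.trans_le ((ht₁.le_or_le x hx).resolve_right hxy.not_ge)
  have hcup₀ : R.ccw z t₀ y := R.rotate (h.ccw_of_between ht₀.right_mem ht₀.lt ht₀y)
  have hcup₁ : R.ccw z t₁ y := R.rotate (h.ccw_of_between ht₁.left_mem hzt₁ ht₁.lt)
  have ha₀ := h.ccw_succ hS ht₀
  have hb₁ := h.ccw_pred hS ht₁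
  have hb₀ : ¬ R.ccw t₀ y b :=
    h.hole.rotate.not_wedge hS.not_hasHole5 ht₀.right_mem hcup₀ ha₀
  have ha₁ : ¬ R.ccw a z t₁ := fun ha₁ =>
    h.hole.rotate.not_wedge hS.not_hasHole5 ht₁.left_mem hcup₁ ha₁ hb₁
  have hne : t₀ ≠ t₁ := fun heq => ha₁ (heq ▸ ha₀)
  have hlt : t₀ < t₁ :=
    ((ht₀.le_or_le t₁ ht₁.left_mem).resolve_left hzt₁.not_ge).lt_of_ne hne
  have hcap₀ : R.ccw t₀ z t₁ := R.ccw_of_not (fun hcup =>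
    ha₁ (R.second ha₀ hcup haz ht₀.lt hzt₁)) ht₀.lt.ne hne hzt₁.ne
  exact hb₀ (R.third (R.third hcap₀ hcup₁ hlt hzt₁ ht₁.lt) hb₁ ht₀y ht₁.lt hyb)

end PinchedQuad

theorem PinchedEdge.false (hS : R.Barren S) (h : R.PinchedEdge S a b) : False :=
  let ⟨_, _, hquad⟩ := h.exists_pinchedQuad hS
  hquad.false hS

end PinchedEdge

section Critical

variable {α : Type*} [LinearOrder α] {R : RadialSystem α} {S : Finset α} {a b c d e u v w x y : α}

attribute [local grind →] rotate asymm first second third last swap_of_not_ccw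

theorem lt_or_lt_of_convex (huvc : R.ccw u v c) (hvcd : R.ccw v c d) (hucd : R.ccw u c d)
    (huvd : R.ccw u v d) (huv : u < v) (hcd : c < d) : v < c ∨ d < u := by
  by_contra! h
  obtain ⟨-, hvc, huc⟩ := R.ccw_ne huvc
  obtain ⟨-, hvd, hud⟩ := R.ccw_ne huvd
  rcases huc.lt_or_gt with huc | huc <;> rcases hvd.lt_or_gt with hvd | hvd <;> grind

theorem ccw_of_lower_edges (huvc : R.ccw u v c) (hvcd : R.ccw v c d) (hucd : R.ccw u c d)
    (huvd : R.ccw u v d) (hcd : c < d) (huvx : R.ccw u v x) (hux : u < x) (hxv : x < v) :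
    R.ccw c d x := by
  have huv := hux.trans hxv
  rcases lt_or_lt_of_convex huvc hvcd hucd huvd huv hcd with hvc | hdu
  · have hxvc : R.ccw x v c := R.third (R.rotate' huvx) huvc hxv huv hvc
    exact R.rotate (R.third hxvc hvcd (hxv.trans hvc) hvc hcd)
  · have hdux : R.ccw d u x := R.second (R.rotate' huvd) huvx hdu huv hux
    exact R.second (R.rotate hucd) hdux hcd hdu (hdu.trans hux)

theorem exists_edge (hu : ∀ a ∈ S, ∀ b ∈ S, ∀ c ∈ S, ¬ R.InTriangle a b c u) (hv : v ∈ S)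
    (hvu : v ≠ u) : ∃ w ∈ S, w ≠ u ∧ ∀ y ∈ S, y ≠ u → y ≠ w → R.ccw u w y := by
  have htrans : ∀ x ∈ S, ∀ y ∈ S, ∀ z ∈ S, R.ccw u x y → R.ccw u y z → R.ccw u x z := by
    intro x hx y hy z hz hxy hyz
    by_contra hxz
    refine hu x hx y hy z hz ⟨R.rotate hxy, R.rotate hyz, R.rotate' ?_⟩
    refine R.ccw_of_not hxz (R.ccw_ne hxy).1 ?_ (R.ccw_ne hyz).2.2
    rintro rfl
    exact R.asymm hxy (R.rotate' hyz)
  obtain ⟨w, hw, hmin⟩ := Finset.exists_min_image (S.erase u)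
    (fun w => (S.filter fun y => R.ccw u y w).card) ⟨v, Finset.mem_erase.2 ⟨hvu, hv⟩⟩
  obtain ⟨hwu, hwS⟩ := Finset.mem_erase.1 hw
  refine ⟨w, hwS, hwu, fun y hy hyu hyw => ?_⟩
  by_contra hleft
  have huyw : R.ccw u y w := R.rotate (R.ccw_of_not hleft hwu.symm hyw.symm hyu.symm)
  refine (hmin y (Finset.mem_erase.2 ⟨hyu, hy⟩)).not_gt (Finset.card_lt_card ?_)
  refine (Finset.ssubset_iff_of_subset fun z hz => ?_).2 ⟨y, by simp [hy, huyw], ?_⟩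
  · simp only [Finset.mem_filter] at hz ⊢
    exact ⟨hz.1, htrans z hz.1 y hy w hwS hz.2 huyw⟩
  · intro hyy
    exact (R.ccw_ne (Finset.mem_filter.1 hyy).2).2.1 rfl

variable (R S) in
/-- A point set in which neither alternative of the theorem holds and no 5-hole survives the removal
of an exposed point. -/
structure Critical : Prop where
  not_hasClearCap : ¬ R.HasClearCap S
  not_hasClearHole : ¬ R.HasClearHole S
  mem_of_exposed : ∀ u ∈ S, R.Exposed S u → ∀ a b c d e, R.Hole5 S a b c d e → u ∈ [a, b, c, d, e]

namespace Critical

theorem edge (hS : R.Critical S) (hu : R.Exposed S u) (h : R.Hole5 S u v c d e) (hvu : v < u) :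
    ∀ y ∈ S, y ≠ u → y ≠ v → R.ccw u v y := by
  obtain ⟨w, hw, hwu, hedge⟩ := exists_edge hu.not_inTriangle h.mem.2.1 hvu.ne
  suffices w = v from this ▸ hedge
  by_contra hwv
  have huwv : R.ccw w v u := R.rotate (hedge v h.mem.2.1 hvu.ne (Ne.symm hwv))
  have hwlt : w < u := hwu.lt_or_gt.resolve_right fun huw =>
    R.asymm (hu.above v h.mem.2.1 w hw hvu huw) huwv
  have hmem := hS.mem_of_exposed w hw (Exposed.head_of_edge hwlt hedge) _ _ _ _ _ h
  simp only [List.mem_cons, List.not_mem_nil, or_false] at hmem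
  obtain rfl | rfl | rfl | rfl | rfl := hmem
  exacts [hwu rfl, hwv rfl, R.asymm huwv (R.rotate h.abc), R.asymm huwv (R.rotate h.abd),
    R.asymm huwv (R.rotate h.abe)]

theorem exposed_of_lt (hS : R.Critical S) (h : R.Hole5 S u v c d e) (hvu : v < u) :
    R.Exposed S u := by
  induction hn : (S.filter (u < ·)).card using Nat.strong_induction_on generalizing u v c d e with
  | _ n ih =>
  subst hn
  obtain ⟨hu, hv, hc, hd, he⟩ := h.mem
  rcases (R.ccw_ne h.abe).2.2.lt_or_gt with hue | heu
  · have hcard : (S.filter (e < ·)).card < (S.filter (u < ·)).card :=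
      Finset.card_lt_card ⟨fun x hx => by simp_all [hue.trans], fun hsub => by
        simpa using hsub (Finset.mem_filter.2 ⟨he, hue⟩)⟩
    have hrot := h.rotate.rotate.rotate.rotate
    exact Exposed.head_of_edge hue (hS.edge (ih _ hcard hrot hue rfl) hrot hue)
  · obtain ⟨g, hg, hmax⟩ := S.exists_max_image id ⟨u, hu⟩
    have hgexp : R.Exposed S g := .of_isGreatest hmax
    have hmem := hS.mem_of_exposed g hg hgexp _ _ _ _ _ h
    simp only [List.mem_cons, List.not_mem_nil, or_false] at hmem
    obtain rfl | rfl | rfl | rfl | rfl := hmem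
    · exact hgexp
    · exact absurd hvu (hmax u hu).not_gt
    · have hvg := (hmax v hv).lt_of_ne (R.ccw_ne h.abc).2.1
      rcases lt_or_lt_of_convex (R.rotate' h.abe) h.abc (R.rotate' h.bce) (R.rotate' h.ace)
        heu hvg with hlt | hlt
      exacts [absurd hvu hlt.not_gt, absurd hlt (hmax e he).not_gt]
    · have hcg := (hmax c hc).lt_of_ne (R.ccw_ne h.acd).2.1
      rcases lt_or_lt_of_convex (R.rotate' h.ace) h.acd (R.rotate' h.cde) (R.rotate' h.ade)
        heu hcg with huc | hlt
      · rcases lt_or_lt_of_convex (R.rotate' h.abe) h.abc (R.rotate' h.bce) (R.rotate' h.ace)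
          heu (hvu.trans huc) with hlt | hlt
        exacts [absurd hvu hlt.not_gt, absurd (hlt.trans heu) huc.not_gt]
      · exact absurd hlt (hmax e he).not_gt
    · exact absurd heu (hmax u hu).not_gt

theorem hull_edge (hS : R.Critical S) (h : R.Hole5 S u v c d e) (hvu : v < u) :
    ∀ y ∈ S, y ≠ u → y ≠ v → R.ccw u v y :=
  hS.edge (hS.exposed_of_lt h hvu) h hvu

theorem ccw_of_between (hS : R.Critical S) (h : R.Hole5 S u v c d e) (hx : x ∈ S) (hux : u < x)
    (hxv : x < v) (hxc : x ≠ c) (hxd : x ≠ d) (hxe : x ≠ e) : R.ccw v u x := by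
  by_contra hvux
  have huvx : R.ccw u v x := R.ccw_of_not hvux (hux.trans hxv).ne' hux.ne hxv.ne'
  have huv := hux.trans hxv
  obtain ⟨-, hvc, -⟩ := R.ccw_ne h.abc
  obtain ⟨hcd, hde, -⟩ := R.ccw_ne h.cde
  obtain ⟨-, -, hue⟩ := R.ccw_ne h.abe
  refine h.empty x hx ⟨huvx, ?_, ?_, ?_, ?_⟩
  · rcases hvc.lt_or_gt with hlt | hlt
    · exact R.rotate (R.third (R.rotate' huvx) h.abc hxv huv hlt)
    · exact hS.hull_edge h.rotate hlt x hx hxv.ne hxc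
  · rcases hcd.lt_or_gt with hlt | hlt
    · exact ccw_of_lower_edges h.abc h.bcd h.acd h.abd hlt huvx hux hxv
    · exact hS.hull_edge h.rotate.rotate hlt x hx hxc hxd
  · rcases hde.lt_or_gt with hlt | hlt
    · exact ccw_of_lower_edges h.abd h.bde h.ade h.abe hlt huvx hux hxv
    · exact hS.hull_edge h.rotate.rotate.rotate hlt x hx hxd hxe
  · rcases hue.lt_or_gt with hlt | hlt
    · exact hS.hull_edge h.rotate.rotate.rotate.rotate hlt x hx hxe hux.ne'
    · exact R.second (R.rotate' h.abe) huvx hlt huv hux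

theorem exists_below (hS : R.Critical S) (h : R.Hole5 S a b c d e) (hx : x ∈ [a, b, c, d, e])
    (hy : y ∈ [a, b, c, d, e]) (hxy : x < y) : ∃ z ∈ S, x < z ∧ z < y ∧ R.ccw y x z := by
  by_contra! hclear
  refine hS.not_hasClearHole ⟨_, _, _, _, _, _, _, h, hx, hy, hxy, fun z hz hxz hzy => ?_⟩
  exact R.ccw_of_not (hclear z hz hxz hzy) hxy.ne' hxz.ne hzy.ne'

theorem barren_erase (hS : R.Critical S) (huS : u ∈ S) (hu : R.Exposed S u) :
    R.Barren (S.erase u) where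
  not_hasHole5 := by
    rintro ⟨a, b, c, d, e, h⟩
    have hm := h.mem
    simp only [Finset.mem_erase] at hm
    have hmem := hS.mem_of_exposed u huS hu _ _ _ _ _ (hu.hole5_of_erase h)
    simp only [List.mem_cons, List.not_mem_nil, or_false] at hmem
    tauto
  not_hasClearCap hcap := hS.not_hasClearCap (hu.hasClearCap_of_erase hcap)

theorem mirror (hS : R.Critical S) : R.mirror.Critical (S : Finset αᵒᵈ) where
  not_hasClearCap := by
    rintro ⟨a, b, c, d, h⟩
    exact hS.not_hasClearCap ⟨_, _, _, _, h.of_mirror⟩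
  not_hasClearHole := by
    rintro ⟨a, b, c, d, e, x, y, h, hx, hy, hxy, hclear⟩
    have hrev {z : α} : z ∈ [a, b, c, d, e] → z ∈ [e, d, c, b, a] := List.mem_reverse.2
    exact hS.not_hasClearHole ⟨_, _, _, _, _, y, x, h.of_mirror, hrev hy, hrev hx, hxy,
      hclear.of_mirror⟩
  mem_of_exposed u hu hexp a b c d e h := by
    have hmem := hS.mem_of_exposed u hu hexp.of_mirror _ _ _ _ _ h.of_mirror
    exact List.mem_reverse.1 hmem

end Critical

end Critical

section LowerChains

variable {α : Type*} [LinearOrder α] {R : RadialSystem α} {S : Finset α} {a b c d e x y : α}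

theorem Hole5.hole4_erase (h : R.Hole5 S a b c d e) : R.Hole4 (S.erase a) b c d e := by
  obtain ⟨-, hb, hc, hd, he⟩ := h.mem
  obtain ⟨hab, -, hac⟩ := R.ccw_ne h.abc
  obtain ⟨had, -, hae⟩ := R.ccw_ne h.ade
  exact h.rotate.hole4.mono (S.erase_subset a) (Finset.mem_erase.2 ⟨hab.symm, hb⟩)
    (Finset.mem_erase.2 ⟨hac.symm, hc⟩) (Finset.mem_erase.2 ⟨had.symm, hd⟩)
    (Finset.mem_erase.2 ⟨hae.symm, he⟩)

theorem Critical.le_of_mem (hS : R.Critical S) (h : R.Hole5 S a b c d e) (hab : a < b)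
    (hac : a < c) (had : a < d) (hae : a < e) (hx : x ∈ S) : a ≤ x := by
  obtain ⟨g, hg, hmin⟩ := S.exists_min_image id ⟨x, hx⟩
  obtain ⟨ha, -⟩ := h.mem
  have hmem := hS.mem_of_exposed g hg (.of_isLeast hmin) _ _ _ _ _ h
  simp only [List.mem_cons, List.not_mem_nil, or_false] at hmem
  have hga : g ≤ a := hmin a ha
  obtain rfl | rfl | rfl | rfl | rfl := hmem
  exacts [hmin x hx, absurd hab hga.not_gt, absurd hac hga.not_gt, absurd had hga.not_gt,
    absurd hae hga.not_gt]

theorem Critical.not_wedge (hS : R.Critical S) (ha : R.Exposed S a) (h : R.Hole5 S a b c d e)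
    (hx : x ∈ S) (hxa : x ≠ a) (hbxc : R.ccw b x c) (hebx : R.ccw e b x) (hxcd : R.ccw x c d) :
    False :=
  h.hole4_erase.not_wedge (hS.barren_erase h.mem.1 ha).not_hasHole5
    (Finset.mem_erase.2 ⟨hxa, hx⟩) hbxc hebx hxcd

theorem Critical.not_wedge' (hS : R.Critical S) (ha : R.Exposed S a) (h : R.Hole5 S a b c d e)
    (hx : x ∈ S) (hxa : x ≠ a) (hexb : R.ccw e x b) (hdex : R.ccw d e x) (hxbc : R.ccw x b c) :
    False :=
  h.hole4_erase.rotate.rotate.rotate.not_wedge (hS.barren_erase h.mem.1 ha).not_hasHole5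
    (Finset.mem_erase.2 ⟨hxa, hx⟩) hexb hdex hxbc

theorem Barren.not_pinched (hS : R.Barren S) (hl : R.LeftAnchored S e b)
    (hr : R.RightAnchored S b d) (hb : b ∈ S) (hnext : ∀ x, Consecutive S b x → x < d → R.ccw b e x)
    (hprev : ∀ x, Consecutive S x b → e < x → R.ccw d b x) (hx : x ∈ S) (hex : e < x)
    (hxd : x < d) (hxb : x ≠ b) : False := by
  obtain ⟨q, hq⟩ := exists_consecutive_left hb hl.mem hl.lt
  obtain ⟨q', hq'⟩ := exists_consecutive_right hb hr.mem hr.lt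
  have heq : e ≤ q := (hq.le_or_le e hl.mem).resolve_right hl.lt.not_ge
  have hqd : q' ≤ d := (hq'.le_or_le d hr.mem).resolve_left hr.lt.not_ge
  refine Pinched.false hS ⟨hl, hr, hq, hq', hqd.eq_or_lt.imp_right (hnext _ hq'),
    heq.eq_or_lt.imp Eq.symm (hprev _ hq), ?_⟩
  by_contra! hne
  obtain ⟨rfl, rfl⟩ := hne
  exact (hq.le_or_le x hx).elim hex.not_ge fun hbx =>
    (hq'.le_or_le x hx).elim (fun hxb' => hxb (hxb'.antisymm hbx)) hxd.not_ge

theorem Critical.not_lower_one (hS : R.Critical S) (h : R.Hole5 S a b c d e) (hae : a < e)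
    (hed : e < d) (hdc : d < c) (hcb : c < b) : False := by
  have hab := hae.trans (hed.trans (hdc.trans hcb))
  obtain ⟨x, hx, hax, hxb, hbax⟩ := hS.exists_below (x := a) (y := b) h (by simp) (by simp) hab
  have ha : R.Exposed S a := .of_isLeast fun y hy => hS.le_of_mem h hab
    (hae.trans (hed.trans hdc)) (hae.trans hed) hae hy
  have hne {z : α} (hz : R.ccw a b z) : x ≠ z := by
    rintro rfl
    exact R.asymm hz hbax
  have hbex : R.ccw b e x :=
    R.last (R.rotate h.abe) hbax (hed.trans (hdc.trans hcb)) hab hxb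
  refine hS.not_wedge' ha h hx hax.ne' (R.rotate hbex) ?_ ?_
  · exact hS.hull_edge h.rotate.rotate.rotate hed x hx (hne h.abd) (hne h.abe)
  · exact R.rotate' (hS.hull_edge h.rotate hcb x hx hxb.ne (hne h.abc))

theorem Critical.not_pinched (hS : R.Critical S) (ha : R.Exposed S a) (hc : R.Exposed S c)
    (haS : a ∈ S) (he : e ∈ S) (hb : b ∈ S) (hd : d ∈ S) (heb : e < b) (hbd : b < d)
    (hlt : ∃ x ∈ S, a < x ∧ x < e) (hgt : ∃ x ∈ S, d < x ∧ x < c)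
    (hbe : ∀ x ∈ S, x < b → x ≠ a → x ≠ e → R.ccw b e x)
    (hdb : ∀ x ∈ S, b < x → x ≠ c → x ≠ d → R.ccw d b x)
    (hnext : ∀ x, Consecutive S b x → x < d → R.ccw b e x)
    (hprev : ∀ x, Consecutive S x b → e < x → R.ccw d b x)
    (hx : x ∈ S) (hex : e < x) (hxd : x < d) (hxb : x ≠ b) : False := by
  obtain ⟨y, hy, hay, hye⟩ := hlt
  obtain ⟨z, hz, hdz, hzc⟩ := hgt
  have hT {w : α} (hw : w ∈ S) (haw : a < w) (hwc : w < c) : w ∈ (S.erase a).erase c :=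
    Finset.mem_erase.2 ⟨hwc.ne, Finset.mem_erase.2 ⟨haw.ne', hw⟩⟩
  have hTS {w : α} (hw : w ∈ (S.erase a).erase c) : w ≠ c ∧ w ≠ a ∧ w ∈ S := by
    simpa only [Finset.mem_erase] using hw
  have hcons {v w : α} (h : Consecutive ((S.erase a).erase c) v w) (hav : a ≤ v) (hwc : w ≤ c) :
      Consecutive S v w := by
    refine ⟨(hTS h.left_mem).2.2, (hTS h.right_mem).2.2, h.lt, fun u hu => ?_⟩
    by_cases hua : u = a
    · exact .inl (hua ▸ hav)
    by_cases huc : u = c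
    · exact .inr (huc ▸ hwc)
    exact h.le_or_le u (Finset.mem_erase.2 ⟨huc, Finset.mem_erase.2 ⟨hua, hu⟩⟩)
  refine ((hc.mono (S.erase_subset a)).barren_erase (hS.barren_erase haS ha)).not_pinched
    (e := e) (b := b) (d := d) (x := x)
    ⟨hT he (by order) (by order), heb, ⟨y, hT hy hay (by order), hye⟩, fun w hw hwb hwe => ?_⟩
    ⟨hT hd (by order) (by order), hbd, ⟨z, hT hz (by order) hzc, hdz⟩, fun w hw hbw hwd => ?_⟩
    (hT hb (by order) (by order)) (fun w hw hwd => ?_) (fun w hw hew => ?_)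
    (hT hx (by order) (by order)) hex hxd hxb
  · exact hbe w (hTS hw).2.2 hwb (hTS hw).2.1 hwe
  · exact hdb w (hTS hw).2.2 hbw (hTS hw).1 hwd
  · exact hnext w (hcons hw (by order) (by order)) hwd
  · exact hprev w (hcons hw (by order) (by order)) hew

end LowerChains

section LowerTwo

variable {α : Type*} [LinearOrder α] {R : RadialSystem α} {S : Finset α} {a b c d e x : α}

variable (R S) in
/-- A 5-hole of a critical set whose lower chain has the two edges `ab` and `bc`. -/
structure LowerTwo (a b c d e : α) : Prop where
  critical : R.Critical S
  hole : R.Hole5 S a b c d e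
  lt : a < b ∧ b < c ∧ a < e ∧ e < d ∧ d < c

namespace LowerTwo

theorem mirror (h : R.LowerTwo S a b c d e) : R.mirror.LowerTwo (S : Finset αᵒᵈ) c b a e d where
  critical := h.critical.mirror
  hole := h.hole.mirror.rotate.rotate
  lt := ⟨h.lt.2.1, h.lt.1, h.lt.2.2.2.2, h.lt.2.2.2.1, h.lt.2.2.1⟩

theorem exposed_left (h : R.LowerTwo S a b c d e) : R.Exposed S a := by
  obtain ⟨hab, hbc, hae, hed, -⟩ := h.lt
  exact .of_isLeast fun x hx =>
    h.critical.le_of_mem h.hole hab (hab.trans hbc) (hae.trans hed) hae hx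

theorem exposed_right (h : R.LowerTwo S a b c d e) : R.Exposed S c :=
  h.mirror.exposed_left.of_mirror

theorem not_ccw_of_between (h : R.LowerTwo S a b c d e) (hx : x ∈ S) (hbx : b < x) (hxc : x < c)
    (hxd : x ≠ d) : ¬ R.ccw e b x := by
  intro hebx
  obtain ⟨hab, -, -, -, hdc⟩ := h.lt
  have hxa := (hab.trans hbx).ne'
  have hcbx := h.critical.ccw_of_between h.hole.rotate hx hbx hxc hxd (R.ccw_ne hebx).2.2.symm hxa
  have hcdx := h.critical.hull_edge h.hole.rotate.rotate hdc x hx hxc.ne hxd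
  exact h.critical.not_wedge h.exposed_left h.hole hx hxa (R.rotate hcbx) hebx (R.rotate' hcdx)

theorem left_lt (h : R.LowerTwo S a b c d e) : e < b := by
  obtain ⟨-, hbc, -, hed, hdc⟩ := h.lt
  by_contra! heb
  have hbe : b < e := heb.lt_of_ne (R.ccw_ne h.hole.abe).2.1
  obtain ⟨x, hx, hbx, hxc, hcbx⟩ :=
    h.critical.exists_below (x := b) (y := c) h.hole (by simp) (by simp) hbc
  have hxd : x ≠ d := by
    rintro rfl
    exact R.asymm h.hole.bcd hcbx
  have hbxe : R.ccw b x e := R.first (R.rotate hcbx) h.hole.bce hbx hbc hbe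
  exact h.not_ccw_of_between hx hbx hxc hxd (R.rotate' hbxe)

theorem ccw_of_lt (h : R.LowerTwo S a b c d e) (hx : x ∈ S) (hxb : x < b) (hxa : x ≠ a)
    (hxe : x ≠ e) : R.ccw b e x := by
  obtain ⟨hab, hbc, hae, hed, -⟩ := h.lt
  have hbd : b < d := h.mirror.left_lt
  have hax : a < x := (h.critical.le_of_mem h.hole hab (hab.trans hbc) (hae.trans hed) hae
    hx).lt_of_ne' hxa
  have hbax := h.critical.ccw_of_between h.hole hx hax hxb (hxb.trans hbc).ne (hxb.trans hbd).ne hxe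
  exact R.last (R.rotate h.hole.abe) hbax h.left_lt hab hxb

theorem ccw_of_gt (h : R.LowerTwo S a b c d e) (hx : x ∈ S) (hbx : b < x) (hxd : x < d) :
    R.ccw b e x := by
  have heb := h.left_lt
  exact R.ccw_of_not (h.not_ccw_of_between hx hbx (hxd.trans h.lt.2.2.2.2) hxd.ne) heb.ne hbx.ne
    (heb.trans hbx).ne

theorem false (h : R.LowerTwo S a b c d e) : False := by
  obtain ⟨-, -, hae, -, hdc⟩ := h.lt
  have heb : e < b := h.left_lt
  have hbd : b < d := h.mirror.left_lt
  obtain ⟨haS, hbS, -, hdS, heS⟩ := h.hole.mem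
  obtain ⟨x, hx, hax, hxe, -⟩ :=
    h.critical.exists_below (x := a) (y := e) h.hole (by simp) (by simp) hae
  obtain ⟨y, hy, hdy, hyc, -⟩ :=
    h.critical.exists_below (x := d) (y := c) h.hole (by simp) (by simp) hdc
  obtain ⟨z, hz, hez, hzb, -⟩ :=
    h.critical.exists_below (x := e) (y := b) h.hole (by simp) (by simp) heb
  exact h.critical.not_pinched h.exposed_left h.exposed_right haS heS hbS hdS heb hbd
    ⟨x, hx, hax, hxe⟩ ⟨y, hy, hdy, hyc⟩ (fun _ => h.ccw_of_lt) (fun _ => h.mirror.ccw_of_lt)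
    (fun _ hw => h.ccw_of_gt hw.right_mem hw.lt)
    (fun _ hw => h.mirror.ccw_of_gt hw.left_mem hw.lt) hz hez (hzb.trans hbd) hzb.ne

end LowerTwo

end LowerTwo

section LowerFour

variable {α : Type*} [LinearOrder α] {R : RadialSystem α} {S : Finset α} {a b c d e x : α}

variable (R S) in
/-- A 5-hole of a critical set whose lower chain has the four edges `ab`, `bc`, `cd` and `de`. -/
structure LowerFour (a b c d e : α) : Prop where
  critical : R.Critical S
  hole : R.Hole5 S a b c d e
  lt : a < b ∧ b < c ∧ c < d ∧ d < e

namespace LowerFour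

theorem mirror (h : R.LowerFour S a b c d e) : R.mirror.LowerFour (S : Finset αᵒᵈ) e d c b a where
  critical := h.critical.mirror
  hole := h.hole.mirror
  lt := ⟨h.lt.2.2.2, h.lt.2.2.1, h.lt.2.1, h.lt.1⟩

theorem le_of_mem (h : R.LowerFour S a b c d e) (hx : x ∈ S) : a ≤ x := by
  obtain ⟨hab, hbc, hcd, hde⟩ := h.lt
  exact h.critical.le_of_mem h.hole hab (by order) (by order) (by order) hx

theorem exposed_left (h : R.LowerFour S a b c d e) : R.Exposed S a :=
  .of_isLeast fun _ => h.le_of_mem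

theorem exposed_right (h : R.LowerFour S a b c d e) : R.Exposed S e :=
  h.mirror.exposed_left.of_mirror

theorem ccw_of_between_left (h : R.LowerFour S a b c d e) (hx : x ∈ S) (hax : a < x) (hxb : x < b) :
    R.ccw b x c := by
  by_contra hcap
  obtain ⟨-, hbc, hcd, hde⟩ := h.lt
  have hxbc : R.ccw x b c := R.ccw_of_not hcap hxb.ne' (by order) hbc.ne
  have hxbd : R.ccw x b d := R.second hxbc h.hole.bcd hxb hbc (hbc.trans hcd)
  have hxbe : R.ccw x b e := R.second hxbc h.hole.bce hxb hbc (by order)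
  have hxde : R.ccw x d e := R.third hxbd h.hole.bde (by order) (by order) hde
  exact h.critical.not_wedge' h.exposed_left h.hole hx hax.ne' (R.rotate' hxbe) (R.rotate hxde) hxbc

theorem ccw_of_between_right (h : R.LowerFour S a b c d e) (hx : x ∈ S) (hbx : b < x)
    (hxc : x < c) : R.ccw c x d := by
  by_contra hcap
  obtain ⟨hab, -, hcd, hde⟩ := h.lt
  have hxcd : R.ccw x c d := R.ccw_of_not hcap hxc.ne' (by order) hcd.ne
  have hxce : R.ccw x c e := R.second hxcd h.hole.cde hxc hcd (hcd.trans hde)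
  have hcbx : R.ccw c b x :=
    h.critical.ccw_of_between h.hole.rotate hx hbx hxc (by order) (by order) (by order)
  have hbxe : R.ccw b x e := R.second (R.rotate hcbx) hxce hbx hxc (by order)
  exact h.critical.not_wedge h.exposed_left h.hole hx (by order) (R.rotate hcbx) (R.rotate' hbxe)
    hxcd

theorem ccw_of_lt (h : R.LowerFour S a b c d e) (hx : x ∈ S) (hxc : x < c) (hxa : x ≠ a)
    (hxb : x ≠ b) : R.ccw c b x := by
  obtain ⟨-, -, hcd, hde⟩ := h.lt
  rcases hxb.lt_or_gt with hxb | hbx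
  · exact R.rotate' (h.ccw_of_between_left hx ((h.le_of_mem hx).lt_of_ne' hxa) hxb)
  · exact h.critical.ccw_of_between h.hole.rotate hx hbx hxc (by order) (by order) (by order)

theorem false (h : R.LowerFour S a b c d e) : False := by
  obtain ⟨hab, hbc, hcd, hde⟩ := h.lt
  obtain ⟨haS, hbS, hcS, hdS, -⟩ := h.hole.mem
  obtain ⟨x, hx, hax, hxb, -⟩ :=
    h.critical.exists_below (x := a) (y := b) h.hole (by simp) (by simp) hab
  obtain ⟨y, hy, hdy, hye, -⟩ :=
    h.critical.exists_below (x := d) (y := e) h.hole (by simp) (by simp) hde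
  obtain ⟨z, hz, hbz, hzc, -⟩ :=
    h.critical.exists_below (x := b) (y := c) h.hole (by simp) (by simp) hbc
  exact h.critical.not_pinched h.exposed_left h.exposed_right haS hbS hcS hdS hbc hcd
    ⟨x, hx, hax, hxb⟩ ⟨y, hy, hdy, hye⟩ (fun _ => h.ccw_of_lt) (fun _ => h.mirror.ccw_of_lt)
    (fun _ hw hwd => R.rotate (h.mirror.ccw_of_between_right hw.right_mem hwd hw.lt))
    (fun _ hw hbw => R.rotate' (h.ccw_of_between_right hw.left_mem hbw hw.lt))
    hz hbz (hzc.trans hcd) hzc.ne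

end LowerFour

end LowerFour

section LowerThree

variable {α : Type*} [LinearOrder α] {R : RadialSystem α} {S : Finset α} {a b c d e x y : α}

variable (R S) in
/-- A 5-hole of a critical set whose lower chain has the three edges `ab`, `bc` and `cd`. -/
structure LowerThree (a b c d e : α) : Prop where
  critical : R.Critical S
  hole : R.Hole5 S a b c d e
  lt : a < b ∧ b < c ∧ c < d ∧ a < e ∧ e < d

namespace LowerThree

theorem mirror (h : R.LowerThree S a b c d e) : R.mirror.LowerThree (S : Finset αᵒᵈ) d c b a e where
  critical := h.critical.mirror
  hole := h.hole.mirror.rotate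
  lt := ⟨h.lt.2.2.1, h.lt.2.1, h.lt.1, h.lt.2.2.2.2, h.lt.2.2.2.1⟩

theorem le_of_mem (h : R.LowerThree S a b c d e) (hx : x ∈ S) : a ≤ x := by
  obtain ⟨hab, hbc, hcd, hae, -⟩ := h.lt
  exact h.critical.le_of_mem h.hole hab (by order) (by order) hae hx

theorem exposed_left (h : R.LowerThree S a b c d e) : R.Exposed S a :=
  .of_isLeast fun _ => h.le_of_mem

theorem exposed_right (h : R.LowerThree S a b c d e) : R.Exposed S d :=
  h.mirror.exposed_left.of_mirror

theorem hull_edge (h : R.LowerThree S a b c d e) (hx : x ∈ S) (hxd : x ≠ d) (hxe : x ≠ e) :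
    R.ccw d e x :=
  h.critical.hull_edge h.hole.rotate.rotate.rotate h.lt.2.2.2.2 x hx hxd hxe

theorem exposed_apex (h : R.LowerThree S a b c d e) : R.Exposed S e :=
  Exposed.head_of_edge h.lt.2.2.2.2 fun _ => h.hull_edge

theorem barren_erase (h : R.LowerThree S a b c d e) :
    R.Barren (((S.erase a).erase d).erase e) :=
  ((h.exposed_apex.mono (S.erase_subset a)).mono ((S.erase a).erase_subset d)).barren_erase
    ((h.exposed_right.mono (S.erase_subset a)).barren_erase
      (h.critical.barren_erase h.hole.mem.1 h.exposed_left))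

theorem ccw_left (h : R.LowerThree S a b c d e) (hx : x ∈ S) (hax : a < x) (hxb : x < b)
    (hxe : x ≠ e) : R.ccw b a x := by
  obtain ⟨-, hbc, hcd, -⟩ := h.lt
  exact h.critical.ccw_of_between h.hole hx hax hxb (by order) (by order) hxe

theorem ccw_middle (h : R.LowerThree S a b c d e) (hx : x ∈ S) (hbx : b < x) (hxc : x < c)
    (hxe : x ≠ e) : R.ccw c b x := by
  obtain ⟨hab, -, hcd, -⟩ := h.lt
  exact h.critical.ccw_of_between h.hole.rotate hx hbx hxc (by order) hxe (by order)

theorem ccw_apex_of_lt (h : R.LowerThree S a b c d e) (hx : x ∈ S) (hax : a < x) (hxb : x < b)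
    (hxe : x ≠ e) (heb : e < b) : R.ccw b e x :=
  R.last (R.rotate h.hole.abe) (h.ccw_left hx hax hxb hxe) heb h.lt.1 hxb

theorem ccw_of_between_left (h : R.LowerThree S a b c d e) (hx : x ∈ S) (hax : a < x)
    (hxb : x < b) (hxe : x ≠ e) : R.ccw b x c := by
  by_contra hcap
  obtain ⟨-, hbc, hcd, -⟩ := h.lt
  have hxbc : R.ccw x b c := R.ccw_of_not hcap hxb.ne' (by order) hbc.ne
  refine h.critical.not_wedge' h.exposed_left h.hole hx hax.ne' ?_
    (h.hull_edge hx (by order) hxe) hxbc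
  rcases (R.ccw_ne h.hole.abe).2.1.lt_or_gt with hbe | heb
  · exact R.rotate' (R.second hxbc h.hole.bce hxb hbc hbe)
  · exact R.rotate (h.ccw_apex_of_lt hx hax hxb hxe heb)

theorem not_ccw_ccw (h : R.LowerThree S a b c d e) (hx : x ∈ S) (hbx : b < x) (hxc : x < c)
    (hebx : R.ccw e b x) (hxcd : R.ccw x c d) : False :=
  h.critical.not_wedge h.exposed_left h.hole hx (h.lt.1.trans hbx).ne'
    (R.rotate (h.ccw_middle hx hbx hxc (R.ccw_ne hebx).2.2.symm)) hebx hxcd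

theorem not_ccw_ccw' (h : R.LowerThree S a b c d e) (hx : x ∈ S) (hbx : b < x) (hxc : x < c)
    (habx : R.ccw a b x) (hxce : R.ccw x c e) : False :=
  h.hole.rotate.rotate.rotate.hole4_erase.rotate.rotate.not_wedge
    (h.critical.barren_erase h.hole.mem.2.2.2.1 h.exposed_right).not_hasHole5
    (Finset.mem_erase.2 ⟨(hxc.trans h.lt.2.2.1).ne, hx⟩)
    (R.rotate (h.ccw_middle hx hbx hxc (R.ccw_ne hxce).2.2)) habx hxce

theorem ccw_left_of_not_ccw (h : R.LowerThree S a b c d e) (hnot : ¬ R.ccw a b y) (hx : x ∈ S)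
    (hax : a < x) (hxb : x < b) (hxe : x ≠ e) (hby : b < y) : R.ccw b x y := by
  by_contra hcap
  have hxby : R.ccw x b y := R.ccw_of_not hcap hxb.ne' (hxb.trans hby).ne hby.ne
  exact hnot (R.third (R.rotate (h.ccw_left hx hax hxb hxe)) hxby h.lt.1 hxb hby)

theorem mem_erase_iff (h : R.LowerThree S a b c d e) :
    x ∈ ((S.erase a).erase d).erase e ↔ x ≠ e ∧ x ∈ S ∧ a < x ∧ x < d := by
  have hle : x ∈ S → a ≤ x ∧ x ≤ d := fun hx => ⟨h.le_of_mem hx, h.mirror.le_of_mem hx⟩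
  grind

theorem exists_mem_erase_between (h : R.LowerThree S a b c d e) (hx : x ∈ [a, b, c, d, e])
    (hy : y ∈ [a, b, c, d, e]) (hxy : x < y) (hax : a ≤ x) (hyd : y ≤ d) (hxye : R.ccw x y e) :
    ∃ w ∈ ((S.erase a).erase d).erase e, x < w ∧ w < y := by
  obtain ⟨w, hw, hxw, hwy, hcup⟩ := h.critical.exists_below h.hole hx hy hxy
  refine ⟨w, h.mem_erase_iff.2 ⟨?_, hw, by order, by order⟩, hxw, hwy⟩
  rintro rfl
  exact R.asymm hxye hcup

theorem false_of_not_ccw (h : R.LowerThree S a b c d e)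
    (hnot : ∀ x ∈ S, b < x → x < c → x ≠ e → ¬ R.ccw a b x ∧ ¬ R.ccw x c d)
    (htwo : ∃ x ∈ S, ∃ y ∈ S, a < x ∧ y < d ∧ x ≠ e ∧ y ≠ e ∧ x < y ∧
      (y < b ∨ b < x ∧ y < c ∨ c < x)) : False := by
  obtain ⟨hab, hbc, hcd, -⟩ := h.lt
  obtain ⟨-, hbS, hcS, -⟩ := h.hole.mem
  refine PinchedEdge.false h.barren_erase (a := b) (b := c)
    { mem := ⟨h.mem_erase_iff.2 ⟨(R.ccw_ne h.hole.abe).2.1, hbS, hab, hbc.trans hcd⟩,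
        h.mem_erase_iff.2 ⟨(R.ccw_ne h.hole.ace).2.1, hcS, hab.trans hbc, hcd⟩⟩
      lt := hbc
      left := ?_
      right := ?_
      below := fun x hx hbx hxc => R.rotate
        (h.ccw_middle (h.mem_erase_iff.1 hx).2.1 hbx hxc (h.mem_erase_iff.1 hx).1)
      exists_lt := ?_
      exists_between := ?_
      exists_gt := ?_
      exists_two := ?_ }
  · intro x hx hxb y hy hby hyc
    obtain ⟨hxe, hx, hax, -⟩ := h.mem_erase_iff.1 hx
    obtain ⟨hye, hy, -⟩ := h.mem_erase_iff.1 hy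
    obtain rfl | hyc := hyc.eq_or_lt
    · exact h.ccw_of_between_left hx hax hxb hxe
    · exact h.ccw_left_of_not_ccw (hnot y hy hby hyc hye).1 hx hax hxb hxe hby
  · intro x hx hcx y hy hby hyc
    obtain ⟨hxe, hx, -, hxd⟩ := h.mem_erase_iff.1 hx
    obtain ⟨hye, hy, -⟩ := h.mem_erase_iff.1 hy
    obtain rfl | hby := hby.eq_or_lt
    · have hxcb : R.ccw x c b := h.mirror.ccw_of_between_left hx hxd hcx hxe
      exact R.rotate hxcb
    · have hxcy : R.ccw x c y := h.mirror.ccw_left_of_not_ccw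
        (fun hcdy => (hnot y hy hby hyc hye).2 (R.rotate' hcdy)) hx hxd hcx hxe hyc
      exact R.rotate hxcy
  · obtain ⟨w, hw, -, hwb⟩ :=
      h.exists_mem_erase_between (by simp) (by simp) hab le_rfl (by order) h.hole.abe
    exact ⟨w, hw, hwb⟩
  · exact h.exists_mem_erase_between (by simp) (by simp) hbc (by order) (by order) h.hole.bce
  · obtain ⟨w, hw, hcw, -⟩ :=
      h.exists_mem_erase_between (by simp) (by simp) hcd (by order) le_rfl h.hole.cde
    exact ⟨w, hw, hcw⟩
  · obtain ⟨x, hx, y, hy, hax, hyd, hxe, hye, hxy, hpos⟩ := htwo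
    exact ⟨x, h.mem_erase_iff.2 ⟨hxe, hx, hax, by order⟩,
      y, h.mem_erase_iff.2 ⟨hye, hy, by order, hyd⟩, hxy, hpos⟩

theorem ccw_of_lt_apex (h : R.LowerThree S a b c d e) (hx : x ∈ S) (hbx : b < x) (hxc : x < c)
    (hxe : x ≠ e) (hbe : b < e) : R.ccw e b x :=
  R.rotate' (R.first (R.rotate (h.ccw_middle hx hbx hxc hxe)) h.hole.bce hbx h.lt.2.1 hbe)

theorem false_of_between (h : R.LowerThree S a b c d e) (hbe : b < e) (hec : e < c) : False := by
  obtain ⟨x, hx, hbx, hxe, -⟩ :=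
    h.critical.exists_below (x := b) (y := e) h.hole (by simp) (by simp) hbe
  obtain ⟨y, hy, hey, hyc, -⟩ :=
    h.critical.exists_below (x := e) (y := c) h.hole (by simp) (by simp) hec
  obtain ⟨hab, -, hcd, -⟩ := h.lt
  refine h.false_of_not_ccw (fun z hz hbz hzc hze => ⟨fun habz => ?_, fun hzcd => ?_⟩)
    ⟨x, hx, y, hy, by order, by order, hxe.ne, hey.ne', by order, .inr (.inl ⟨hbx, hyc⟩)⟩
  · have hcez : R.ccw c e z := h.mirror.ccw_of_lt_apex hz hzc hbz hze hec
    exact h.not_ccw_ccw' hz hbz hzc habz (R.rotate' hcez)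
  · exact h.not_ccw_ccw hz hbz hzc (h.ccw_of_lt_apex hz hbz hzc hze hbe) hzcd

theorem false_of_ccw (h : R.LowerThree S a b c d e) (heb : e < b)
    (hnext : ∀ x, Consecutive S b x → x < c → R.ccw b e x) : False := by
  obtain ⟨-, hbc, hcd, hae, -⟩ := h.lt
  obtain ⟨haS, hbS, hcS, -, heS⟩ := h.hole.mem
  obtain ⟨x, hx, hax, hxe, -⟩ :=
    h.critical.exists_below (x := a) (y := e) h.hole (by simp) (by simp) hae
  obtain ⟨y, hy, hcy, hyd, -⟩ :=
    h.critical.exists_below (x := c) (y := d) h.hole (by simp) (by simp) hcd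
  obtain ⟨z, hz, hbz, hzc, -⟩ :=
    h.critical.exists_below (x := b) (y := c) h.hole (by simp) (by simp) hbc
  refine h.critical.not_pinched h.exposed_left h.exposed_right haS heS hbS hcS heb hbc
    ⟨x, hx, hax, hxe⟩ ⟨y, hy, hcy, hyd⟩ (fun w hw hwb hwa hwe => ?_) (fun w hw hbw hwd hwc => ?_)
    hnext (fun w hw hew => ?_) hz (heb.trans hbz) hzc hbz.ne'
  · exact h.ccw_apex_of_lt hw ((h.le_of_mem hw).lt_of_ne' hwa) hwb hwe heb
  · rcases hwc.lt_or_gt with hwc | hcw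
    · exact h.ccw_middle hw hbw hwc (by order)
    · have hwd' : w < d := (h.mirror.le_of_mem hw).lt_of_ne' hwd
      have hwcb : R.ccw w c b :=
        h.mirror.ccw_of_between_left hw hwd' hcw (heb.trans (hbc.trans hcw)).ne'
      exact R.rotate hwcb
  · exact R.rotate' (h.ccw_of_between_left hw.left_mem (hae.trans hew) hw.lt hew.ne')

theorem not_ccw_of_next (h : R.LowerThree S a b c d e) (heb : e < b) (hy : Consecutive S b y)
    (heby : R.ccw e b y) (hx : x ∈ S) (hbx : b < x) (hxc : x < c) : ¬ R.ccw x c d := by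
  intro hxcd
  have hebx : ¬ R.ccw e b x := fun hebx => h.not_ccw_ccw hx hbx hxc hebx hxcd
  have hyx : y < x :=
    ((hy.le_or_le x hx).resolve_left hbx.not_ge).lt_of_ne fun hyx => hebx (hyx ▸ heby)
  obtain ⟨-, -, hcd, -⟩ := h.lt
  have hby := hy.lt
  have hbyc := R.rotate (h.ccw_middle hy.right_mem hby (by order) (by order))
  have hybx : R.ccw y b x :=
    R.ccw_of_not (fun hbyx => hebx (R.second heby hbyx heb hby hbx)) hby.ne hyx.ne hbx.ne
  have hyxc : R.ccw y x c := by
    by_contra hxyc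
    refine R.asymm hybx (R.second hbyc (R.rotate (R.ccw_of_not hxyc hyx.ne hxc.ne (by order))) hby
      (hyx.trans hxc) hyx)
  exact h.not_ccw_ccw hy.right_mem hby (hyx.trans hxc) heby (R.third hyxc hxcd (by order) hxc hcd)

theorem false_of_lt (h : R.LowerThree S a b c d e) (heb : e < b) : False := by
  refine h.false_of_ccw heb fun y hy hyc => ?_
  by_contra hbey
  have hby := hy.lt
  obtain ⟨hab, -, hcd, hae, -⟩ := h.lt
  have heby : R.ccw e b y := R.ccw_of_not hbey (by order) (by order) (by order)
  obtain ⟨u, hu, hau, hue, -⟩ :=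
    h.critical.exists_below (x := a) (y := e) h.hole (by simp) (by simp) hae
  obtain ⟨v, hv, hev, hvb, -⟩ :=
    h.critical.exists_below (x := e) (y := b) h.hole (by simp) (by simp) heb
  refine h.false_of_not_ccw (fun x hx hbx hxc hxe => ⟨fun habx => ?_, ?_⟩)
    ⟨u, hu, v, hv, hau, by order, hue.ne, hev.ne', hue.trans hev, .inl hvb⟩
  · have hebx : R.ccw e b x := R.third (R.rotate' h.hole.abe) habx heb hab hbx
    have hbxc : R.ccw b x c := R.rotate (h.ccw_middle hx hbx hxc hxe)
    exact h.not_ccw_ccw' hx hbx hxc habx (R.rotate (R.third hebx hbxc (by order) hbx hxc))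
  · exact h.not_ccw_of_next heb hy heby hx hbx hxc

theorem false (h : R.LowerThree S a b c d e) : False := by
  rcases (R.ccw_ne h.hole.abe).2.1.lt_or_gt with hbe | heb
  · rcases (R.ccw_ne h.hole.ace).2.1.lt_or_gt with hce | hec
    exacts [h.mirror.false_of_lt hce, h.false_of_between hbe hec]
  · exact h.false_of_lt heb

end LowerThree

end LowerThree

section Induction

variable {α : Type*} [LinearOrder α] {R : RadialSystem α} {S : Finset α} {a b c d e : α}

theorem Hole5.exists_isLeast (h : R.Hole5 S a b c d e) :
    ∃ a b c d e, R.Hole5 S a b c d e ∧ a < b ∧ a < c ∧ a < d ∧ a < e := by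
  have hmin : ∃ a b c d e, R.Hole5 S a b c d e ∧ a ≤ b ∧ a ≤ c ∧ a ≤ d ∧ a ≤ e := by
    obtain ⟨m, hm, hle⟩ := Finset.exists_min_image {a, b, c, d, e} id ⟨a, by simp⟩
    simp only [Finset.mem_insert, Finset.mem_singleton, forall_eq_or_imp, forall_eq, id] at hm hle
    obtain ⟨ha, hb, hc, hd, he⟩ := hle
    obtain rfl | rfl | rfl | rfl | rfl := hm
    exacts [⟨_, _, _, _, _, h, hb, hc, hd, he⟩, ⟨_, _, _, _, _, h.rotate, hc, hd, he, ha⟩,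
      ⟨_, _, _, _, _, h.rotate.rotate, hd, he, ha, hb⟩,
      ⟨_, _, _, _, _, h.rotate.rotate.rotate, he, ha, hb, hc⟩,
      ⟨_, _, _, _, _, h.rotate.rotate.rotate.rotate, ha, hb, hc, hd⟩]
  obtain ⟨a, b, c, d, e, h, hab, hac, had, hae⟩ := hmin
  exact ⟨a, b, c, d, e, h, hab.lt_of_ne (R.ccw_ne h.abc).1, hac.lt_of_ne (R.ccw_ne h.abc).2.2,
    had.lt_of_ne (R.ccw_ne h.abd).2.2, hae.lt_of_ne (R.ccw_ne h.abe).2.2⟩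

theorem Hole5.lt_of_lt (h : R.Hole5 S a b c d e) (hab : a < b) (hae : a < e) (hde : d < e) :
    b < c ∧ c < d := by
  have hbd : b < d :=
    (lt_or_lt_of_convex h.abd h.bde h.ade h.abe hab hde).resolve_right hae.not_gt
  have hcd : c < d := by
    by_contra! hdc
    have hdc' := hdc.lt_of_ne (R.ccw_ne h.cde).1.symm
    rcases lt_or_lt_of_convex h.bcd h.cde h.bde h.bce (hbd.trans hdc') hde with hlt | hlt
    exacts [hlt.not_gt hdc', hlt.not_gt (hbd.trans hde)]
  exact ⟨(lt_or_lt_of_convex h.abc h.bcd h.acd h.abd hab hcd).resolve_right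
    (hab.trans hbd).not_gt, hcd⟩

theorem Critical.not_hasHole5 (hS : R.Critical S) : ¬ R.HasHole5 S := by
  rintro ⟨_, _, _, _, _, h⟩
  obtain ⟨a, b, c, d, e, h, hab, -, had, hae⟩ := h.exists_isLeast
  rcases (R.ccw_ne h.cde).2.1.lt_or_gt with hde | hed
  · obtain ⟨hbc, hcd⟩ := h.lt_of_lt hab hae hde
    exact LowerFour.false ⟨hS, h, hab, hbc, hcd, hde⟩
  rcases (R.ccw_ne h.cde).1.lt_or_gt with hcd | hdc
  · have hbc := (lt_or_lt_of_convex h.abc h.bcd h.acd h.abd hab hcd).resolve_right had.not_gt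
    exact LowerThree.false ⟨hS, h, hab, hbc, hcd, hae, hed⟩
  rcases (R.ccw_ne h.abc).2.1.lt_or_gt with hbc | hcb
  · exact LowerTwo.false ⟨hS, h, hab, hbc, hae, hed, hdc⟩
  · exact hS.not_lower_one h hae hed hdc hcb

theorem Exposed.hasClearHole_of_erase {u : α} (hu : R.Exposed S u)
    (h : R.HasClearHole (S.erase u)) : R.HasClearHole S := by
  obtain ⟨a, b, c, d, e, x, y, h, hx, hy, hxy, hclear⟩ := h
  have hmem : ∀ z ∈ [a, b, c, d, e], z ∈ S := by
    have := (hu.hole5_of_erase h).mem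
    simpa using this
  exact ⟨a, b, c, d, e, x, y, hu.hole5_of_erase h, hx, hy, hxy,
    hu.clear_of_erase (hmem x hx) (hmem y hy) hclear⟩

theorem HasHole5.hasClearCap_or_hasClearHole (h : R.HasHole5 S) :
    R.HasClearCap S ∨ R.HasClearHole S := by
  induction S using Finset.strongInduction with
  | _ S ih =>
  by_contra! hnot
  refine Critical.not_hasHole5 ⟨hnot.1, hnot.2, fun u huS hu a b c d e h5 => ?_⟩ h
  by_contra hmem
  simp only [List.mem_cons, List.not_mem_nil, or_false, not_or] at hmem
  have herase : R.Hole5 (S.erase u) a b c d e :=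
    { h5 with
      mem := by have := h5.mem; simp only [Finset.mem_erase]; tauto
      empty := fun x hx => h5.empty x (Finset.mem_of_mem_erase hx) }
  rcases ih _ (Finset.erase_ssubset huS) ⟨_, _, _, _, _, herase⟩ with hcap | hhole
  exacts [hnot.1 (hu.hasClearCap_of_erase hcap), hnot.2 (hu.hasClearHole_of_erase hhole)]

end Induction

section ConvexPosition

variable {α : Type*} [LinearOrder α] {R : RadialSystem α} {T : Finset α} {a b c d : α}

theorem ccw_of_not_inTriangle (habc : R.ccw a b c) (hacd : R.ccw a c d)
    (hc : ¬ R.InTriangle a b d c) (hbd : b ≠ d) : R.ccw b c d := by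
  have hbdc : ¬ R.ccw b d c := fun hbdc => hc ⟨habc, hbdc, R.rotate' hacd⟩
  exact R.rotate (R.ccw_of_not hbdc hbd (R.ccw_ne hacd).2.1.symm (R.ccw_ne habc).2.1)

theorem exists_convexPentagon (hcard : T.card = 5)
    (hT : ∀ u ∈ T, ∀ a ∈ T, ∀ b ∈ T, ∀ c ∈ T, ¬ R.InTriangle a b c u) :
    ∃ a b c d e, T = {a, b, c, d, e} ∧ ConvexPentagon R.ccw a b c d e := by
  obtain ⟨a, ha⟩ : T.Nonempty := Finset.card_pos.1 (by omega)
  have hfirst {U : Finset α} (hUT : U ⊆ T) (hU : 1 < U.card) :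
      ∃ w ∈ U, w ≠ a ∧ ∀ y ∈ U, y ≠ a → y ≠ w → R.ccw a w y := by
    obtain ⟨v, hv, hva⟩ := Finset.exists_mem_ne hU a
    exact exists_edge (fun x hx y hy z hz => hT a ha x (hUT hx) y (hUT hy) z (hUT hz)) hv hva
  obtain ⟨b, hb, hba, hab⟩ := hfirst subset_rfl (by omega)
  have hcard₁ := Finset.card_erase_of_mem hb
  obtain ⟨c, hc, hca, hac⟩ := hfirst (T.erase_subset b) (by omega)
  have hcard₂ := Finset.card_erase_of_mem hc
  obtain ⟨d, hd, hda, had⟩ := hfirst (((T.erase b).erase_subset c).trans (T.erase_subset b))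
    (by omega)
  have hcard₃ := Finset.card_erase_of_mem hd
  obtain ⟨e, he, hea⟩ := Finset.exists_mem_ne (s := ((T.erase b).erase c).erase d) (by omega) a
  simp only [Finset.mem_erase] at hc hd he hac had
  have hbc := hc.1.symm
  have hbd := hd.2.1.symm
  have hcd := hd.1.symm
  have hbe := he.2.2.1.symm
  have hce := he.2.1.symm
  have hde := he.1.symm
  have habc := hab c hc.2 hca hbc.symm
  have habd := hab d hd.2.2 hda hbd.symm
  have hacd := hac d hd.2 hda hcd.symm
  have hace := hac e he.2.2 hea hce.symm
  have hade := had e he.2 hea hde.symm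
  refine ⟨a, b, c, d, e, ?_, habc, habd, hab e he.2.2.2 hea hbe.symm, hacd, hace, hade,
    ccw_of_not_inTriangle habc hacd (hT _ hc.2 _ ha _ hb _ hd.2.2) hbd,
    ccw_of_not_inTriangle habc hace (hT _ hc.2 _ ha _ hb _ he.2.2.2) hbe,
    ccw_of_not_inTriangle habd hade (hT _ hd.2.2 _ ha _ hb _ he.2.2.2) hbe,
    ccw_of_not_inTriangle hacd hade (hT _ hd.2.2 _ ha _ hc.2 _ he.2.2.2) hce⟩
  symm
  refine Finset.eq_of_subset_of_card_le ?_ ?_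
  · simp [Finset.insert_subset_iff, ha, hb, hc, hd, he]
  · simp [hcard, hba.symm, hca.symm, hda.symm, hea.symm, hbc, hbd, hbe, hcd, hce, hde]

attribute [local grind →] rotate asymm first second third last swap_of_not_ccw

theorem ccw_of_cap_of_cap (hab : a < b) (hbc : b < c) (hcd : c < d) (hbac : R.ccw b a c)
    (hcbd : R.ccw c b d) : R.ccw d b a ∧ R.ccw d c a := by
  have : a < c := hab.trans hbc
  have hbd := hbc.trans hcd
  have had := hab.trans hbd
  grind

end ConvexPosition

end RadialSystem

section Orientation

variable {a b c d e x y : Pt} {S T : Set Pt}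

theorem det2_rotate (a b c : Pt) : det2 b c a = det2 a b c := by
  unfold det2
  ring

theorem det2_swap (a b c : Pt) : det2 b a c = -det2 a b c := by
  unfold det2
  ring

theorem det2_right_self (a b : Pt) : det2 a b b = 0 := by
  unfold det2
  ring

theorem det2_left_self (a b : Pt) : det2 a b a = 0 := by
  unfold det2
  ring

theorem det2_add_smul {s t : ℝ} (hst : s + t = 1) :
    det2 a b (s • x + t • y) = s * det2 a b x + t * det2 a b y := by
  obtain rfl : s = 1 - t := by linarith
  simp only [det2, PiLp.add_apply, PiLp.smul_apply, smul_eq_mul]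
  ring

theorem det2_eq_add_add (x a b c : Pt) : det2 a b c = det2 a b x + det2 b c x + det2 c a x := by
  unfold det2
  ring

theorem continuous_det2 (a b : Pt) : Continuous (det2 a b) := by
  unfold det2
  fun_prop

/-- `c` lies strictly to the left of the line directed from `a` to `b`. -/
def Ccw (a b c : Pt) : Prop := 0 < det2 a b c

theorem Ccw.rotate (h : Ccw a b c) : Ccw b c a := h.trans_eq (det2_rotate a b c).symm

theorem Ccw.not_swap (h : Ccw a b c) : ¬ Ccw b a c := by
  unfold Ccw at *
  linarith [det2_swap a b c]

theorem Ccw.ne (h : Ccw a b c) : a ≠ b ∧ b ≠ c ∧ a ≠ c := by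
  refine ⟨?_, ?_, ?_⟩ <;> rintro rfl
  · exact h.not_swap h
  · exact h.rotate.not_swap h.rotate
  · exact h.rotate.rotate.not_swap h.rotate.rotate

theorem Ccw.of_inTriangle (hab : Ccw a b x) (hbc : Ccw b c x) (hca : Ccw c a x) : Ccw a b c :=
  (add_pos (add_pos hab hbc) hca).trans_eq (det2_eq_add_add x a b c).symm

theorem convexHull_subset_det2_nonneg (hS : ∀ x ∈ S, 0 ≤ det2 a b x) :
    convexHull ℝ S ⊆ {x | 0 ≤ det2 a b x} := by
  refine convexHull_min hS fun x hx y hy s t hs ht hst => ?_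
  simp only [Set.mem_ofPred_eq, det2_add_smul hst] at hx hy ⊢
  positivity

theorem mem_convexHull_of_det2_nonneg (habc : Ccw a b c) (hab : 0 ≤ det2 a b x)
    (hbc : 0 ≤ det2 b c x) (hca : 0 ≤ det2 c a x) (ha : a ∈ S) (hb : b ∈ S) (hc : c ∈ S) :
    x ∈ convexHull ℝ S := by
  have hD : 0 < det2 a b c := habc
  have hx : x = (det2 b c x / det2 a b c) • a + (det2 c a x / det2 a b c) • b +
      (det2 a b x / det2 a b c) • c := by
    ext i
    simp only [PiLp.add_apply, PiLp.smul_apply, smul_eq_mul]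
    field_simp
    unfold det2
    fin_cases i <;> simp only [Fin.zero_eta, Fin.mk_one] <;> ring
  have hsum : det2 b c x / det2 a b c + det2 c a x / det2 a b c + det2 a b x / det2 a b c = 1 := by
    field_simp
    unfold det2
    ring
  have hmem := (convex_convexHull ℝ S).sum_mem (t := Finset.univ)
    (w := ![det2 b c x / det2 a b c, det2 c a x / det2 a b c, det2 a b x / det2 a b c])
    (z := ![a, b, c])
    (by intro i _; fin_cases i <;> exact div_nonneg ‹_› hD.le)
    (by simpa [Fin.sum_univ_three] using hsum)
    (by simp [Fin.forall_fin_succ, subset_convexHull ℝ S ha, subset_convexHull ℝ S hb,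
      subset_convexHull ℝ S hc])
  rw [hx]
  simpa [Fin.sum_univ_three] using hmem

theorem Ccw.of_mem_interior (hc : Ccw a b c) (hx : x ∈ interior {y | 0 ≤ det2 a b y}) :
    Ccw a b x := by
  refine lt_of_le_of_ne (interior_subset (s := {y | 0 ≤ det2 a b y}) hx) fun h0 => ?_
  have hcont : Filter.Tendsto (fun t : ℝ => (1 + t) • x + (-t) • c) (nhds 0) (nhds x) := by
    have : Continuous fun t : ℝ => (1 + t) • x + (-t) • c := by fun_prop
    simpa using this.tendsto 0
  have hev := hcont.eventually (mem_interior_iff_mem_nhds.1 hx)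
  obtain ⟨t, ht, ht0⟩ := ((hev.filter_mono nhdsWithin_le_nhds).and
    (self_mem_nhdsWithin (s := Set.Ioi (0 : ℝ)))).exists
  have hneg : det2 a b ((1 + t) • x + (-t) • c) < 0 := by
    rw [det2_add_smul (by ring), ← h0]
    have := mul_pos ht0 hc
    linarith
  exact hneg.not_ge ht

theorem collinear_of_det2_eq_zero (hab : a ≠ b) (h : det2 a b c = 0) :
    Collinear ℝ {a, b, c} := by
  have hne : b 0 - a 0 ≠ 0 ∨ b 1 - a 1 ≠ 0 := by
    contrapose! hab
    ext i
    fin_cases i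
    · exact (sub_eq_zero.1 hab.1).symm
    · exact (sub_eq_zero.1 hab.2).symm
  obtain ⟨r, hr⟩ : ∃ r : ℝ, c = r • (b - a) + a := by
    unfold det2 at h
    rcases hne with h0 | h0
    · refine ⟨(c 0 - a 0) / (b 0 - a 0), ?_⟩
      ext i
      fin_cases i <;> simp <;> field_simp <;> linarith
    · refine ⟨(c 1 - a 1) / (b 1 - a 1), ?_⟩
      ext i
      fin_cases i <;> simp <;> field_simp <;> linarith
  rw [collinear_iff_of_mem (p₀ := a) (by simp)]
  refine ⟨b - a, ?_⟩
  simp only [Set.mem_insert_iff, Set.mem_singleton_iff, forall_eq_or_imp, forall_eq, vadd_eq_add]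
  exact ⟨⟨0, by simp⟩, ⟨1, by simp⟩, ⟨r, hr⟩⟩

theorem GenPos.det2_ne_zero (hS : GenPos S) (ha : a ∈ S) (hb : b ∈ S) (hc : c ∈ S) (hab : a ≠ b)
    (hac : a ≠ c) (hbc : b ≠ c) : det2 a b c ≠ 0 :=
  fun h => hS a ha b hb c hc hab hac hbc (collinear_of_det2_eq_zero hab h)

end Orientation

section Pentagon

variable {P : Set Pt} {a b c d e x : Pt}

theorem ConvexPentagon.notMem_convexHull (h : ConvexPentagon Ccw a b c d e) :
    a ∉ convexHull ℝ {b, c, d, e} := by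
  intro ha
  have hc : 0 < det2 e b c := h.bce.rotate.rotate
  have hd : 0 < det2 e b d := h.bde.rotate.rotate
  have hea : 0 ≤ det2 e b a := by
    refine convexHull_subset_det2_nonneg ?_ ha
    simp [hc.le, hd.le, det2_right_self, det2_left_self]
  have hbe : 0 < det2 b e a := h.abe.rotate
  linarith [det2_swap b e a]

theorem ConvexPentagon.convexPos (h : ConvexPentagon Ccw a b c d e) :
    ConvexPos {a, b, c, d, e} := by
  have hmono {v w₁ w₂ w₃ w₄ : Pt} (hv : v ∉ convexHull ℝ {w₁, w₂, w₃, w₄}) {S : Set Pt}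
    (hS : S ⊆ {v, w₁, w₂, w₃, w₄}) : v ∉ convexHull ℝ (S \ {v}) :=
    fun hv' => hv (convexHull_mono (Set.sdiff_singleton_subset_iff.2 hS) hv')
  have hb := h.rotate Ccw.rotate
  have hc := hb.rotate Ccw.rotate
  have hd := hc.rotate Ccw.rotate
  have he := hd.rotate Ccw.rotate
  simp only [ConvexPos, Set.mem_insert_iff, Set.mem_singleton_iff, forall_eq_or_imp, forall_eq]
  refine ⟨hmono h.notMem_convexHull ?_, hmono hb.notMem_convexHull ?_,
    hmono hc.notMem_convexHull ?_, hmono hd.notMem_convexHull ?_, hmono he.notMem_convexHull ?_⟩ <;>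
  grind

theorem ConvexPentagon.ccw_of_mem_interior (h : ConvexPentagon Ccw a b c d e)
    (hx : x ∈ interior (convexHull ℝ {a, b, c, d, e})) : Ccw a b x := by
  refine Ccw.of_mem_interior h.abc (interior_mono (convexHull_subset_det2_nonneg ?_) hx)
  have hc : 0 < det2 a b c := h.abc
  have hd : 0 < det2 a b d := h.abd
  have he : 0 < det2 a b e := h.abe
  simp [hc.le, hd.le, he.le, det2_right_self, det2_left_self]

theorem ConvexPentagon.mem_interior_convexHull (h : ConvexPentagon Ccw a b c d e)
    (hab : Ccw a b x) (hbc : Ccw b c x) (hcd : Ccw c d x) (hde : Ccw d e x) (hea : Ccw e a x) :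
    x ∈ interior (convexHull ℝ {a, b, c, d, e}) := by
  have hopen (u v : Pt) : IsOpen {y | Ccw u v y} :=
    isOpen_lt continuous_const (continuous_det2 u v)
  refine interior_maximal (t := {y | Ccw a b y} ∩ ({y | Ccw b c y} ∩ ({y | Ccw c d y} ∩
    ({y | Ccw d e y} ∩ {y | Ccw e a y})))) ?_ ((hopen a b).inter ((hopen b c).inter
    ((hopen c d).inter ((hopen d e).inter (hopen e a))))) ⟨hab, hbc, hcd, hde, hea⟩
  rintro y ⟨hab, hbc, hcd, hde, hea⟩
  rcases le_total (det2 a c y) 0 with hac | hac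
  · exact mem_convexHull_of_det2_nonneg h.abc hab.le hbc.le (by linarith [det2_swap a c y])
      (by simp) (by simp) (by simp)
  rcases le_total (det2 a d y) 0 with had | had
  · exact mem_convexHull_of_det2_nonneg h.acd hac hcd.le (by linarith [det2_swap a d y])
      (by simp) (by simp) (by simp)
  · exact mem_convexHull_of_det2_nonneg h.ade had hde.le hea.le (by simp) (by simp) (by simp)

theorem ConvexPentagon.mem_holes5 (h : ConvexPentagon Ccw a b c d e)
    (hP : {a, b, c, d, e} ⊆ P)
    (hempty : ∀ x ∈ P, ¬ (Ccw a b x ∧ Ccw b c x ∧ Ccw c d x ∧ Ccw d e x ∧ Ccw e a x)) :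
    {a, b, c, d, e} ∈ Holes5 P := by
  have hcard : ({a, b, c, d, e} : Finset Pt).card = 5 := by
    have := h.abc.ne
    have := h.cde.ne
    have := h.ade.ne
    have := h.bde.ne
    grind
  have hcoe : (({a, b, c, d, e} : Finset Pt) : Set Pt) = {a, b, c, d, e} := by simp
  refine ⟨hcard, hcoe ▸ hP, hcoe ▸ h.convexPos, fun x hx hint => ?_⟩
  rw [hcoe] at hint
  have hb := h.rotate Ccw.rotate
  have hc := hb.rotate Ccw.rotate
  have hd := hc.rotate Ccw.rotate
  have he := hd.rotate Ccw.rotate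
  refine hempty x hx ⟨h.ccw_of_mem_interior hint, hb.ccw_of_mem_interior ?_,
    hc.ccw_of_mem_interior ?_, hd.ccw_of_mem_interior ?_, he.ccw_of_mem_interior ?_⟩ <;>
  convert hint using 3 <;> grind

end Pentagon

section RadialOrder

variable {V : Finset Pt} {p a b c t : Pt}

theorem pos_of_mul_eq_mul_add_mul {u v w x y z : ℝ} (hu : 0 < u) (hw : 0 < w) (hx : 0 < x)
    (hy : 0 < y) (hz : 0 < z) (h : u * v = w * x + y * z) : 0 < v :=
  (pos_iff_pos_of_mul_pos (h ▸ by positivity)).1 hu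

theorem Ccw.trans_of_notMem_convexHull {S : Set Pt} (hp : p ∉ convexHull ℝ S) (ha : a ∈ S)
    (hb : b ∈ S) (hc : c ∈ S) (hab : Ccw p a b) (hbc : Ccw p b c) : Ccw p a c := by
  by_contra hac
  have hca : 0 ≤ det2 c a p := by
    rw [← det2_rotate, det2_swap]
    linarith [not_lt.1 hac]
  have habc : Ccw a b c := by
    rw [Ccw, det2_eq_add_add p]
    exact add_pos_of_pos_of_nonneg (add_pos hab.rotate hbc.rotate) hca
  exact hp (mem_convexHull_of_det2_nonneg habc hab.rotate.le hbc.rotate.le hca ha hb hc)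

theorem GenPos.ccw_or_ccw {S : Set Pt} (hS : GenPos S) (ha : a ∈ S) (hb : b ∈ S) (hc : c ∈ S)
    (hab : a ≠ b) (hac : a ≠ c) (hbc : b ≠ c) : Ccw a b c ∨ Ccw b a c := by
  unfold Ccw
  rw [det2_swap a b c, neg_pos]
  exact (hS.det2_ne_zero ha hb hc hab hac hbc).lt_or_gt.symm

/-- The clockwise angular order around `p` of a point set whose convex hull misses `p`:
`a < b` when `a` lies to the left of the ray from `p` through `b`. -/
abbrev radialOrder (hV : GenPos (insert p ↑V)) (hp : p ∉ convexHull ℝ (V : Set Pt)) :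
    LinearOrder V :=
  haveI : IsStrictTotalOrder V fun a b => Ccw p b a :=
    { irrefl := fun a h => h.ne.2.1 rfl
      trans := fun a b c hab hbc =>
        Ccw.trans_of_notMem_convexHull hp c.2 b.2 a.2 hbc hab
      trichotomous := fun a b hab hba => by
        by_contra hne
        have hpV {v : V} : p ≠ v := fun h => hp (subset_convexHull ℝ _ (h ▸ v.2))
        have := hV.ccw_or_ccw (Set.mem_insert p _) (Set.mem_insert_of_mem p a.2)
          (Set.mem_insert_of_mem p b.2) hpV hpV (Subtype.coe_ne_coe.2 hne)
        exact this.elim hba fun h => hab h.rotate }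
  linearOrderOfSTO fun a b : V => Ccw p b a

/-- The orientations of the triples of a point set in general position, together with its angular
order around an exterior point. -/
def radialSystem (hV : GenPos (insert p ↑V)) (hp : p ∉ convexHull ℝ (V : Set Pt)) :
    @RadialSystem V (radialOrder hV hp) :=
  letI := radialOrder hV hp
  { ccw := fun a b c => Ccw a b c
    rotate := fun h => h.rotate
    asymm := fun h => h.not_swap
    total := fun {a b c} hab hbc hac => hV.ccw_or_ccw (by simp) (by simp) (by simp)
      (Subtype.coe_ne_coe.2 hab) (Subtype.coe_ne_coe.2 hac) (Subtype.coe_ne_coe.2 hbc)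
    first := fun hab hbc ha hb hc =>
      pos_of_mul_eq_mul_add_mul hb ha hbc hc hab (by unfold det2; ring)
    second := fun hab hbc ha hb hc =>
      pos_of_mul_eq_mul_add_mul hb ha hbc hc hab (by unfold det2; ring)
    third := fun hab hbc ha hb hc =>
      pos_of_mul_eq_mul_add_mul hb ha hbc hc hab (by unfold det2; ring)
    last := fun hab hbc ha hb hc =>
      pos_of_mul_eq_mul_add_mul hb ha hbc hc hab (by unfold det2; ring) }

/-- The points of `V`, seen from `p`, realize `R`: its orientation predicate is the geometric one
and its order is the clockwise angular order around `p`. -/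
structure RadialSystem.IsRealizedBy [LinearOrder V] (R : RadialSystem V) (p : Pt) : Prop where
  ccw_iff {a b c : V} : R.ccw a b c ↔ Ccw (a : Pt) b c
  lt_iff {a b : V} : a < b ↔ Ccw p (b : Pt) a

theorem exists_isRealizedBy (hV : GenPos (insert p ↑V)) (hp : p ∉ convexHull ℝ (V : Set Pt)) :
    ∃ (_ : LinearOrder V) (R : RadialSystem V), R.IsRealizedBy p :=
  let _ := radialOrder hV hp
  ⟨_, radialSystem hV hp, Iff.rfl, Iff.rfl⟩

end RadialOrder

section Holes

theorem ConvexPos.not_inTriangle {S : Set Pt} {a b c x : Pt} (hS : ConvexPos S) (ha : a ∈ S)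
    (hb : b ∈ S) (hc : c ∈ S) (hx : x ∈ S) : ¬ (Ccw a b x ∧ Ccw b c x ∧ Ccw c a x) :=
  fun ⟨hab, hbc, hca⟩ => hS x hx (mem_convexHull_of_det2_nonneg (hab.of_inTriangle hbc hca)
    hab.le hbc.le hca.le ⟨ha, hab.ne.2.2⟩ ⟨hb, hbc.ne.2.2⟩ ⟨hc, hca.ne.2.2⟩)

namespace RadialSystem.IsRealizedBy

variable {V : Finset Pt} [LinearOrder V] {R : RadialSystem V} {p : Pt} {a b c d e : V}

theorem hasHole5 (hR : R.IsRealizedBy p) (h : (Holes5 (V : Set Pt)).Nonempty) :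
    R.HasHole5 Finset.univ := by
  obtain ⟨H, hcard, hHV, hconv, hempty⟩ := h
  lift H to Finset V using hHV
  rw [Finset.card_image_of_injective _ Subtype.val_injective] at hcard
  obtain ⟨a, b, c, d, e, rfl, hpent⟩ := RadialSystem.exists_convexPentagon (R := R) hcard
    fun x hx a ha b hb c hc => by
      simp only [InTriangle, hR.ccw_iff]
      exact hconv.not_inTriangle (by simpa) (by simpa) (by simpa) (by simpa)
  refine ⟨a, b, c, d, e, { hpent with mem := by simp, empty := ?_ }⟩
  simp only [hR.ccw_iff]
  rintro x - ⟨hab, hbc, hcd, hde, hea⟩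
  have hpent' := hpent.map ((↑) : V → Pt) hR.ccw_iff.1
  exact hempty x x.2 (by simpa using hpent'.mem_interior_convexHull hab hbc hcd hde hea)

theorem mem_holes5_of_hole5 (hR : R.IsRealizedBy p) (hp : p ∉ convexHull ℝ (V : Set Pt))
    (h : R.Hole5 Finset.univ a b c d e) :
    {↑a, ↑b, ↑c, ↑d, ↑e} ∈ Holes5 (insert p ↑V : Set Pt) := by
  have hpent := h.toConvexPentagon.map ((↑) : V → Pt) hR.ccw_iff.1
  refine hpent.mem_holes5 (by simp [Set.insert_subset_iff]) ?_
  rintro x (rfl | hx) hin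
  · obtain ⟨hab, hbc, hcd, hde, hea⟩ := hin
    refine hp (convexHull_mono ?_ (interior_subset
      (hpent.mem_interior_convexHull hab hbc hcd hde hea)))
    simp [Set.insert_subset_iff]
  · lift x to V using hx
    simp only [← hR.ccw_iff] at hin
    exact h.empty x (Finset.mem_univ x) hin

theorem convexPentagon_of_cap (hR : R.IsRealizedBy p) (hab : a < b) (hbc : b < c) (hcd : c < d)
    (hbac : R.ccw b a c) (hcbd : R.ccw c b d) : ConvexPentagon Ccw p (d : Pt) c b a where
  abc := hR.lt_iff.1 hcd
  abd := hR.lt_iff.1 (hbc.trans hcd)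
  abe := hR.lt_iff.1 (hab.trans (hbc.trans hcd))
  acd := hR.lt_iff.1 hbc
  ace := hR.lt_iff.1 (hab.trans hbc)
  ade := hR.lt_iff.1 hab
  bcd := hR.ccw_iff.1 (R.rotate' hcbd)
  bce := hR.ccw_iff.1 (ccw_of_cap_of_cap hab hbc hcd hbac hcbd).2
  bde := hR.ccw_iff.1 (ccw_of_cap_of_cap hab hbc hcd hbac hcbd).1
  cde := hR.ccw_iff.1 (R.rotate' hbac)

theorem mem_holes5_of_clearCap (hR : R.IsRealizedBy p) (h : R.ClearCap Finset.univ a b c d) :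
    {p, ↑d, ↑c, ↑b, ↑a} ∈ Holes5 (insert p ↑V : Set Pt) := by
  obtain ⟨-, ⟨hab, hbc, hcd⟩, ⟨hbac, hcbd⟩, hclab, hclbc, hclcd⟩ := h
  refine (hR.convexPentagon_of_cap hab hbc hcd hbac hcbd).mem_holes5
    (by simp [Set.insert_subset_iff]) ?_
  rintro x (rfl | hx) ⟨hpd, hdc, hcb, hba, hap⟩
  · exact hpd.ne.2.2 rfl
  lift x to V using hx
  have hxd : x < d := hR.lt_iff.2 hpd
  have hax : a < x := hR.lt_iff.2 hap.rotate
  have hclear {u v : V} (hclear : R.Clear Finset.univ u v) (hvu : Ccw (v : Pt) u x)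
      (hux : u < x) : v < x := by
    rcases lt_trichotomy x v with hxv | rfl | hvx
    · exact absurd (hR.ccw_iff.1 (hclear x (Finset.mem_univ x) hux hxv)) hvu.not_swap
    · exact absurd rfl hvu.ne.2.2
    · exact hvx
  exact lt_asymm hxd (hclear hclcd hdc (hclear hclbc hcb (hclear hclab hba hax)))

theorem eq_or_eq_of_clear (hR : R.IsRealizedBy p) (hab : a < b) (h : R.Clear Finset.univ a b)
    {x : V} (hx : (x : Pt) ∈ convexHull ℝ {p, ↑a, ↑b}) : x = a ∨ x = b := by
  have hpba : Ccw p b a := hR.lt_iff.1 hab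
  have hnot {u v w : Pt} (huvw : Ccw u v w) (hw : {p, ↑a, ↑b} = ({u, v, w} : Set Pt)) :
      ¬ Ccw v u x := by
    rw [Ccw, det2_swap, neg_pos, not_lt]
    refine convexHull_subset_det2_nonneg ?_ (hw ▸ hx)
    simp [det2_left_self, det2_right_self, huvw.le]
  have hbp : ¬ Ccw (b : Pt) p x := hnot hpba (by grind)
  have hab' : ¬ Ccw (a : Pt) b x := hnot hpba.rotate (by grind)
  have hpa : ¬ Ccw p a x := hnot hpba.rotate.rotate (by grind)
  rcases lt_trichotomy x a with hxa | rfl | hax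
  · exact absurd (hR.lt_iff.1 hxa) hpa
  · exact .inl rfl
  rcases lt_trichotomy x b with hxb | rfl | hbx
  · exact absurd (hR.ccw_iff.1 (h x (Finset.mem_univ x) hax hxb)) hab'
  · exact .inr rfl
  · exact absurd (hR.lt_iff.1 hbx).rotate.rotate hbp

end RadialSystem.IsRealizedBy

end Holes

theorem stmt10_general (P : Finset Pt) (hgp : GenPos (↑P : Set Pt)) (p : Pt) (hp : p ∈ P)
    (hext : p ∉ convexHull ℝ ((↑P : Set Pt) \ {p}))
    (hhole : (Holes5 ((↑P : Set Pt) \ {p})).Nonempty) :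
    (∃ H ∈ Holes5 (↑P : Set Pt), p ∈ H) ∨
    (∃ H ∈ Holes5 (↑P : Set Pt), ∃ a ∈ H, ∃ b ∈ H, a ≠ b ∧
      ∀ x ∈ (↑P : Set Pt), x ∈ convexHull ℝ ({p, a, b} : Set Pt) → x ∈ ({p, a, b} : Set Pt)) := by
  have hP : (P : Set Pt) = insert p ↑(P.erase p) := by
    rw [← Finset.coe_insert, Finset.insert_erase hp]
  rw [← Finset.coe_erase] at hext hhole
  rw [hP] at hgp ⊢
  obtain ⟨_, R, hR⟩ := exists_isRealizedBy hgp hext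
  rcases (hR.hasHole5 hhole).hasClearCap_or_hasClearHole with
    ⟨a, b, c, d, hcap⟩ | ⟨a, b, c, d, e, x, y, hH, hx, hy, hxy, hclear⟩
  · exact .inl ⟨_, hR.mem_holes5_of_clearCap hcap, by simp⟩
  · refine .inr ⟨_, hR.mem_holes5_of_hole5 hext hH, x, ?_, y, ?_, ?_, ?_⟩
    · simpa using List.mem_map_of_mem (f := Subtype.val) hx
    · simpa using List.mem_map_of_mem (f := Subtype.val) hy
    · exact Subtype.coe_ne_coe.2 hxy.ne
    · rintro z (rfl | hz) hzt
      · simp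
      · lift z to ↥(P.erase p) using hz
        rcases hR.eq_or_eq_of_clear hxy hclear hzt with rfl | rfl <;> simp

/-- let `P` be 11 points in general position and `p` a vertex of
the convex hull of `P`. Assuming Harborth's theorem, either some 5-hole of `P`
has `p` as a vertex, or some 5-hole of `P` has two vertices `a`, `b` such that
the triangle `p a b` contains no point of `P` other than its vertices. -/
theorem stmt10
    (harborth : ∀ Q : Finset Pt, Q.card = 10 → GenPos ↑Q → (Holes5 ↑Q).Nonempty)
    (P : Finset Pt) (h11 : P.card = 11) (hgp : GenPos ↑P)
    (p : Pt) (hp : p ∈ P) (hext : p ∉ convexHull ℝ ((↑P : Set Pt) \ {p})) :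
    (∃ H ∈ Holes5 (↑P : Set Pt), p ∈ H) ∨
    (∃ H ∈ Holes5 (↑P : Set Pt), ∃ a ∈ H, ∃ b ∈ H, a ≠ b ∧
      ∀ x ∈ (↑P : Set Pt), x ∈ convexHull ℝ ({p, a, b} : Set Pt) →
        x ∈ ({p, a, b} : Set Pt)) := by
  refine stmt10_general P hgp p hp hext (Finset.coe_erase p P ▸ harborth (P.erase p) ?_ ?_)
  · rw [Finset.card_erase_of_mem hp, h11]
  · exact fun a ha b hb c hc =>
      hgp a (P.mem_of_mem_erase ha) b (P.mem_of_mem_erase hb) c (P.mem_of_mem_erase hc)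
end
end

section
/- Let P be a finite set of points in general position in ℝ², and let a, b be two distinct points of P. Let S be a set of points such that for each s ∈ S, the triangle s,a,b contains no point of P in its interior, all points of S lie strictly on the same side of the line through a and b, and no 5-hole of P has s together with a or b among its vertices in a certain convex pentagon configuration. If there is a point s ∈ S in the interior of the convex hull of S, then the rays from s through a and through b cross the same edge of the convex hull of S, and consequently there is a convex pentagon s, q, a, b, r with q, r consecutive vertices of the hull of S; by the emptying argument this yields a 5-hole of the form s, q′, a, b, r′. Hence if no such 5-hole exists, S is in convex position. -/
open scoped Classical

noncomputable section

/-!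
Put `a` and `b` so that `S` lies to the left of `ab`. Two points of `S` cannot lie in each other's
triangle with `a` and `b`, so they appear in the same angular order from `a` as from `b`, and this
order is total on `S`. Suppose that `p ∈ S` is in the convex hull of `S \ {p}`. The other points
are split into those before `p` and those after `p`. If every `r` before and every `q` after `p`
turned clockwise at `p`, both classes would fit into a common open half-plane bounded by a line
through `p`; so some `r`, `q` turn counterclockwise, and then `p, q, a, b, r` is a convex pentagon.

Replace `q` by a point of `P` for which the ear `p q a` has minimal area, and likewise `r` for the
ear `b r p`; moving a vertex into its ear keeps the pentagon convex, so both ears become empty.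
What remains of the pentagon is the triangle `p a b`, which is empty by assumption.
-/

section Det2

theorem det2_rotate_s17 (u v w : Pt) : det2 u v w = det2 v w u := by
  simp only [det2]; ring

theorem det2_swap_left (u v w : Pt) : det2 u v w = -det2 v u w := by
  simp only [det2]; ring

theorem det2_swap_right (u v w : Pt) : det2 u v w = -det2 u w v := by
  simp only [det2]; ring

@[simp]
theorem det2_self_left (u w : Pt) : det2 u w u = 0 := by
  simp only [det2]; ring

@[simp]
theorem det2_self_right (u w : Pt) : det2 u w w = 0 := by
  simp only [det2]; ring

theorem det2_add_det2_add_det2 (u v w x : Pt) :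
    det2 u v x + det2 v w x + det2 w u x = det2 u v w := by
  simp only [det2]; ring

-- Cramer's rule: `det2 v w x`, `det2 w u x`, `det2 u v x` are barycentric coordinates of `x`.
theorem det2_mul_det2 (u v w p q x : Pt) :
    det2 u v w * det2 p q x =
      det2 v w x * det2 p q u + det2 w u x * det2 p q v + det2 u v x * det2 p q w := by
  simp only [det2]; ring

theorem collinear_of_det2_eq_zero_s17 {u v w : Pt} (h : det2 u v w = 0) :
    Collinear ℝ ({u, v, w} : Set Pt) := by
  rcases eq_or_ne u v with rfl | huv
  · simpa using collinear_pair ℝ u w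
  have hne : (v 0 - u 0) ^ 2 + (v 1 - u 1) ^ 2 ≠ 0 := by
    contrapose! huv
    ext i
    fin_cases i <;> simp only [Fin.zero_eta, Fin.mk_one] <;> nlinarith
  -- `w` is its own orthogonal projection onto the line through `u` and `v`.
  have hw : w = AffineMap.lineMap u v
      (((v 0 - u 0) * (w 0 - u 0) + (v 1 - u 1) * (w 1 - u 1)) /
        ((v 0 - u 0) ^ 2 + (v 1 - u 1) ^ 2)) := by
    rw [det2] at h
    ext i
    fin_cases i <;> simp [AffineMap.lineMap_apply] <;> field_simp
    · linear_combination -(v 1 - u 1) * h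
    · linear_combination (v 0 - u 0) * h
  have hcol : Collinear ℝ ({w, u, v} : Set Pt) :=
    collinear_insert_of_mem_affineSpan_pair (hw ▸ AffineMap.lineMap_mem_affineSpan_pair _ u v)
  rwa [Set.insert_comm, Set.pair_comm] at hcol

theorem GenPos.mono {S T : Set Pt} (hT : GenPos T) (hST : S ⊆ T) : GenPos S :=
  fun u hu v hv w hw => hT u (hST hu) v (hST hv) w (hST hw)

theorem GenPos.det2_ne_zero_s17 {S : Set Pt} (hS : GenPos S) {u v w : Pt} (hu : u ∈ S) (hv : v ∈ S)
    (hw : w ∈ S) (huv : u ≠ v) (huw : u ≠ w) (hvw : v ≠ w) : det2 u v w ≠ 0 :=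
  fun h => hS u hu v hv w hw huv huw hvw (collinear_of_det2_eq_zero_s17 h)

/-- The orientation determinant `det2 u w`, as an affine function of its last argument,
whose preimages of half-lines are half-planes. -/
def det2Affine (u w : Pt) : Pt →ᵃ[ℝ] ℝ where
  toFun := det2 u w
  linear := ((w 0 - u 0) • EuclideanSpace.proj 1 - (w 1 - u 1) • EuclideanSpace.proj 0 :
    Pt →L[ℝ] ℝ)
  map_vadd' x y := by simp [det2]; ring

theorem det2_nonneg_of_mem_convexHull {T : Set Pt} {u w x : Pt} (hT : ∀ v ∈ T, 0 ≤ det2 u w v)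
    (hx : x ∈ convexHull ℝ T) : 0 ≤ det2 u w x :=
  convexHull_min hT ((convex_Ici 0).affine_preimage (det2Affine u w)) hx

theorem det2_pos_of_mem_convexHull {T : Set Pt} {u w x : Pt} (hT : ∀ v ∈ T, 0 < det2 u w v)
    (hx : x ∈ convexHull ℝ T) : 0 < det2 u w x :=
  convexHull_min hT ((convex_Ioi 0).affine_preimage (det2Affine u w)) hx

theorem isOpenMap_det2 {u w : Pt} (huw : u ≠ w) : IsOpenMap (det2 u w) := by
  suffices h : IsOpenMap (det2Affine u w).linear from
    (AffineMap.isOpenMap_linear_iff (f := det2Affine u w)).1 h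
  refine LinearMap.isOpenMap_of_finiteDimensional _ (LinearMap.surjective fun h0 => huw ?_)
  have hx : w 0 - u 0 = 0 := by
    simpa [det2Affine] using LinearMap.congr_fun h0 !₂[0, 1]
  have hy : u 1 - w 1 = 0 := by
    simpa [det2Affine] using LinearMap.congr_fun h0 !₂[1, 0]
  ext i
  fin_cases i
  exacts [(sub_eq_zero.1 hx).symm, sub_eq_zero.1 hy]

theorem det2_pos_of_mem_interior_convexHull {T : Set Pt} {u w x : Pt} (huw : u ≠ w)
    (hT : ∀ v ∈ T, 0 ≤ det2 u w v) (hx : x ∈ interior (convexHull ℝ T)) : 0 < det2 u w x := by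
  have hmem : det2 u w x ∈ interior (Set.Ici 0) :=
    (isOpenMap_det2 huw).mapsTo_interior (fun _ => det2_nonneg_of_mem_convexHull hT) hx
  rwa [interior_Ici] at hmem

theorem notMem_convexHull_union {A B : Set Pt} {p : Pt}
    (hAB : ∀ x ∈ A, ∀ y ∈ B, 0 < det2 p x y) (hA : p ∉ convexHull ℝ A)
    (hB : p ∉ convexHull ℝ B) : p ∉ convexHull ℝ (A ∪ B) := by
  rcases A.eq_empty_or_nonempty with rfl | hAne
  · rwa [Set.empty_union]
  rcases B.eq_empty_or_nonempty with rfl | hBne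
  · rwa [Set.union_empty]
  rw [convexHull_union hAne hBne, mem_convexJoin]
  rintro ⟨x, hx, y, hy, hp⟩
  have hxB : ∀ z ∈ B, 0 < det2 p x z := fun z hz => by
    rw [← det2_rotate_s17]
    exact det2_pos_of_mem_convexHull (fun v hv => by rw [det2_rotate_s17]; exact hAB v hv z hz) hx
  have hxy : 0 < det2 p x y := det2_pos_of_mem_convexHull hxB hy
  have hyx : 0 ≤ det2 y x p := by
    rw [← convexHull_pair] at hp
    exact det2_nonneg_of_mem_convexHull (by simp) hp
  rw [det2_rotate_s17, det2_swap_left] at hxy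
  linarith

end Det2

section Triangle

variable {u v w x : Pt}

theorem mem_convexHull_triple_of_det2_nonneg (h : 0 < det2 u v w) (huv : 0 ≤ det2 u v x)
    (hvw : 0 ≤ det2 v w x) (hwu : 0 ≤ det2 w u x) : x ∈ convexHull ℝ ({u, v, w} : Set Pt) := by
  let c : Fin 3 → ℝ := ![det2 u v x, det2 v w x, det2 w u x]
  have hc : ∀ i, 0 ≤ c i := by
    intro i
    fin_cases i
    exacts [huv, hvw, hwu]
  have hsum : ∑ i, c i = det2 u v w := by
    rw [Fin.sum_univ_three]
    exact det2_add_det2_add_det2 u v w x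
  refine mem_convexHull_of_exists_fintype (fun i => c i / det2 u v w) ![w, u, v]
    (fun i => div_nonneg (hc i) h.le) ?_ (fun i => by fin_cases i <;> simp) ?_
  · rw [← Finset.sum_div, hsum, div_self h.ne']
  · ext i
    have hne := h.ne'
    fin_cases i <;> simp [c, Fin.sum_univ_three] <;> field_simp <;> simp only [det2] <;> ring

/-- The interior of the triangle with vertices `u`, `v`, `w` in counterclockwise order, used for the
ears of a polygon; it is empty if the vertices are not in this order. -/
def openTriangle (u v w : Pt) : Set Pt :=
  {x | 0 < det2 u v x ∧ 0 < det2 v w x ∧ 0 < det2 w u x}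

theorem det2_pos_of_mem_openTriangle {p q : Pt} (hx : x ∈ openTriangle u v w)
    (hu : 0 ≤ det2 p q u) (hv : 0 < det2 p q v) (hw : 0 ≤ det2 p q w) : 0 < det2 p q x := by
  obtain ⟨huv, hvw, hwu⟩ := hx
  have harea : 0 < det2 u v w := by
    rw [← det2_add_det2_add_det2 u v w x]
    positivity
  refine (mul_pos_iff_of_pos_left harea).1 ?_
  rw [det2_mul_det2]
  positivity

theorem det2_lt_of_mem_openTriangle (hx : x ∈ openTriangle u v w) : det2 u x w < det2 u v w := by
  obtain ⟨huv, hvw, -⟩ := hx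
  have hsum := det2_add_det2_add_det2 u v w x
  rw [det2_rotate_s17 w u x] at hsum
  linarith

end Triangle

/-- The points `v i`, in increasing order of the index `i`, are the vertices of a strictly convex
polygon traversed counterclockwise. -/
def PositivelyOriented {ι : Type*} [Preorder ι] (v : ι → Pt) : Prop :=
  ∀ ⦃i j k⦄, i < j → j < k → 0 < det2 (v i) (v j) (v k)

namespace PositivelyOriented

section LinearOrder

variable {ι : Type*} [LinearOrder ι] {v : ι → Pt} {i j k : ι}

theorem det2_nonneg (hv : PositivelyOriented v) (hij : i ≤ j) (hjk : j ≤ k) :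
    0 ≤ det2 (v i) (v j) (v k) := by
  rcases hij.eq_or_lt with rfl | hij
  · simp [det2]
  rcases hjk.eq_or_lt with rfl | hjk
  · simp
  · exact (hv hij hjk).le

theorem update {x : Pt} (hv : PositivelyOriented v) (hij : i ⋖ j) (hjk : j ⋖ k)
    (hx : x ∈ openTriangle (v i) (v j) (v k)) : PositivelyOriented (Function.update v j x) := by
  intro l m n hlm hmn
  rcases eq_or_ne l j with rfl | hl
  · have hkm : k ≤ m := hjk.ge_of_gt hlm
    rw [Function.update_self, Function.update_of_ne hlm.ne',
      Function.update_of_ne (hlm.trans hmn).ne', det2_rotate_s17]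
    apply det2_pos_of_mem_openTriangle hx <;> rw [← det2_rotate_s17]
    · exact hv.det2_nonneg (hij.le.trans hlm.le) hmn.le
    · exact hv hlm hmn
    · exact hv.det2_nonneg hkm hmn.le
  rcases eq_or_ne m j with rfl | hm
  · have hli : l ≤ i := hij.le_of_lt hlm
    have hkn : k ≤ n := hjk.ge_of_gt hmn
    rw [Function.update_self, Function.update_of_ne hl, Function.update_of_ne hmn.ne',
      ← det2_rotate_s17]
    apply det2_pos_of_mem_openTriangle hx <;> rw [det2_rotate_s17]
    · exact hv.det2_nonneg hli (hij.le.trans hmn.le)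
    · exact hv hlm hmn
    · exact hv.det2_nonneg (hlm.le.trans hjk.le) hkn
  rw [Function.update_of_ne hl, Function.update_of_ne hm]
  rcases eq_or_ne n j with rfl | hn
  · have hmi : m ≤ i := hij.le_of_lt hmn
    rw [Function.update_self]
    apply det2_pos_of_mem_openTriangle hx
    · exact hv.det2_nonneg hlm.le hmi
    · exact hv hlm hmn
    · exact hv.det2_nonneg hlm.le (hmn.le.trans hjk.le)
  · rw [Function.update_of_ne hn]
    exact hv hlm hmn

-- An ear of minimal area is empty.
theorem exists_forall_notMem_openTriangle {P : Set Pt} (hv : PositivelyOriented v) (hP : P.Finite)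
    (hij : i ⋖ j) (hjk : j ⋖ k) (hj : v j ∈ P) :
    ∃ q ∈ P, PositivelyOriented (Function.update v j q) ∧
      ∀ x ∈ P, x ∉ openTriangle (v i) q (v k) := by
  obtain ⟨q, ⟨hq, hvq⟩, hmin⟩ := Set.exists_min_image
    {q ∈ P | PositivelyOriented (Function.update v j q)} (fun q => det2 (v i) q (v k))
    (hP.subset (Set.sep_subset _ _)) ⟨v j, hj, by rwa [Function.update_eq_self]⟩
  refine ⟨q, hq, hvq, fun x hx hxq => ?_⟩
  have hvx : PositivelyOriented (Function.update v j x) := by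
    rw [← Function.update_idem (a := j) q x v]
    refine hvq.update hij hjk ?_
    rwa [Function.update_self, Function.update_of_ne hij.ne, Function.update_of_ne hjk.ne']
  exact (hmin x ⟨hx, hvx⟩).not_gt (det2_lt_of_mem_openTriangle hxq)

end LinearOrder

section Fin

theorem det2_add_one_pos {n : ℕ} [NeZero n] {v : Fin n → Pt} (hv : PositivelyOriented v)
    {i j : Fin n} (hji : j ≠ i) (hji' : j ≠ i + 1) : 0 < det2 (v i) (v (i + 1)) (v j) := by
  obtain ⟨m, rfl⟩ := Nat.exists_eq_succ_of_ne_zero (NeZero.ne n)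
  rcases (Fin.le_last i).eq_or_lt with rfl | hi
  · rw [Fin.last_add_one] at hji' ⊢
    rw [det2_rotate_s17]
    exact hv (Fin.pos_of_ne_zero hji') (Fin.lt_last_iff_ne_last.2 hji)
  have hlt : i < i + 1 := Fin.lt_add_one_iff.2 hi
  rcases hji.lt_or_gt with h | h
  · rw [← det2_rotate_s17]
    exact hv h hlt
  · exact hv hlt ((Fin.add_one_le_of_lt h).lt_of_ne' hji')

theorem convexCyclicOrder {n : ℕ} [NeZero n] {v : Fin n → Pt} (hv : PositivelyOriented v) :
    ConvexCyclicOrder v :=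
  ⟨1, Or.inl rfl, fun _ _ hji hji' => by rw [one_mul]; exact hv.det2_add_one_pos hji hji'⟩

theorem det2_edge_pos_of_mem_interior_convexHull {n : ℕ} {v : Fin (n + 3) → Pt} {x : Pt}
    (hv : PositivelyOriented v) (hx : x ∈ interior (convexHull ℝ (Set.range v)))
    (i : Fin (n + 3)) : 0 < det2 (v i) (v (i + 1)) x := by
  have hne : v i ≠ v (i + 1) := fun heq => by
    have h := hv.det2_add_one_pos (i := i) (j := i + 2)
      (by simp [Fin.ext_iff, Nat.mod_eq_of_lt]) (by simp [Fin.ext_iff, Nat.mod_eq_of_lt])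
    simp [heq, det2] at h
  refine det2_pos_of_mem_interior_convexHull hne ?_ hx
  rintro _ ⟨j, rfl⟩
  rcases eq_or_ne j i with rfl | hji
  · simp
  rcases eq_or_ne j (i + 1) with rfl | hji'
  · simp
  · exact (hv.det2_add_one_pos hji hji').le

end Fin

end PositivelyOriented

namespace ConvexCyclicOrder

variable {n : ℕ} [NeZero n] {v : Fin n → Pt}

theorem comp_add_right (hv : ConvexCyclicOrder v) (c : Fin n) :
    ConvexCyclicOrder fun i => v (i + c) := by
  obtain ⟨σ, hσ, h⟩ := hv
  refine ⟨σ, hσ, fun i j hji hji' => ?_⟩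
  have hi : i + c + 1 = i + 1 + c := add_right_comm i c 1
  have := h (i + c) (j + c) (by simpa using hji) (by simpa [hi] using hji')
  rwa [hi] at this

theorem comp_neg (hv : ConvexCyclicOrder v) : ConvexCyclicOrder fun i => v (-i) := by
  obtain ⟨σ, hσ, h⟩ := hv
  refine ⟨-σ, hσ.symm.imp (by rintro rfl; simp) (by rintro rfl; rfl), fun i j hji hji' => ?_⟩
  have hi : -(i + 1) + 1 = -i := by abel
  have := h (-(i + 1)) (-j) (neg_injective.ne hji') (by rwa [hi, Ne, neg_inj])
  rw [hi, det2_swap_left] at this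
  linarith

end ConvexCyclicOrder

section AngularOrder

variable {a b p q r : Pt}

theorem notMem_convexHull_of_det2_pos (hq : 0 < det2 a b q) (hqp : q ≠ p)
    (htri : q ∈ convexHull ℝ ({p, a, b} : Set Pt) → q ∈ ({p, a, b} : Set Pt)) :
    q ∉ convexHull ℝ ({p, a, b} : Set Pt) := fun hmem => by
  rcases htri hmem with rfl | rfl | rfl
  · exact hqp rfl
  · simp at hq
  · simp at hq

theorem det2_pos_trans {o : Pt} (ho : det2 a b o = 0) (hp : 0 < det2 a b p)
    (hr : 0 < det2 a b r) (hq : 0 < det2 a b q) (hrp : 0 < det2 o r p) (hpq : 0 < det2 o p q) :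
    0 < det2 o r q := by
  refine (mul_pos_iff_of_pos_right hp).1 ?_
  rw [det2_mul_det2 o r q a b p, ho, mul_zero, zero_add, det2_rotate_s17 q o p]
  positivity

/-- The points `p` and `q` appear in this order, counterclockwise, both from `a` and from `b`.
This totally orders the points on one side of `ab` that span empty triangles with `a` and `b`. -/
def AngularlyBefore (a b p q : Pt) : Prop := 0 < det2 a p q ∧ 0 < det2 b p q

theorem angularlyBefore_or_angularlyBefore (hp : 0 < det2 a b p) (hq : 0 < det2 a b q)
    (hqp : q ∉ convexHull ℝ ({p, a, b} : Set Pt)) (hpq : p ∉ convexHull ℝ ({q, a, b} : Set Pt)) :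
    AngularlyBefore a b p q ∨ AngularlyBefore a b q p := by
  have hq' : 0 ≤ det2 b p q → 0 < det2 a p q := fun h => by
    contrapose! hqp
    refine mem_convexHull_triple_of_det2_nonneg (by rwa [det2_rotate_s17]) ?_ hq.le h
    rw [det2_swap_left]
    linarith
  have hp' : det2 b p q ≤ 0 → det2 a p q < 0 := fun h => by
    contrapose! hpq
    refine mem_convexHull_triple_of_det2_nonneg (by rwa [det2_rotate_s17]) ?_ hp.le ?_
    · rwa [det2_rotate_s17]
    · rw [det2_swap_right]
      linarith
  rw [AngularlyBefore, AngularlyBefore, det2_swap_right a q p, det2_swap_right b q p]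
  rcases le_or_gt (det2 b p q) 0 with hb | hb
  · have ha := hp' hb
    have hb' : det2 b p q ≠ 0 := fun h => (hq' h.ge).not_gt ha
    exact Or.inr ⟨neg_pos.2 ha, neg_pos.2 (hb.lt_of_ne hb')⟩
  · exact Or.inl ⟨hq' hb.le, hb⟩

theorem AngularlyBefore.ne (hpq : AngularlyBefore a b p q) : p ≠ q := by
  rintro rfl
  simpa using hpq.1

theorem AngularlyBefore.trans (hp : 0 < det2 a b p) (hr : 0 < det2 a b r) (hq : 0 < det2 a b q)
    (hrp : AngularlyBefore a b r p) (hpq : AngularlyBefore a b p q) :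
    AngularlyBefore a b r q :=
  ⟨det2_pos_trans (det2_self_left a b) hp hr hq hrp.1 hpq.1,
    det2_pos_trans (det2_self_right a b) hp hr hq hrp.2 hpq.2⟩

-- Starting the list at `b` makes `r` and `q`, the vertices to be moved, interior to the linear
-- order of indices, so that neither of their ears wraps around.
theorem AngularlyBefore.positivelyOriented (hp : 0 < det2 a b p) (hr : 0 < det2 a b r)
    (hq : 0 < det2 a b q) (hrp : AngularlyBefore a b r p) (hpq : AngularlyBefore a b p q)
    (hrpq : 0 < det2 r p q) : PositivelyOriented ![b, r, p, q, a] := by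
  have hrq := hrp.trans hp hr hq hpq
  have hbra : 0 < det2 b r a := by rwa [← det2_rotate_s17]
  have hbpa : 0 < det2 b p a := by rwa [← det2_rotate_s17]
  have hbqa : 0 < det2 b q a := by rwa [← det2_rotate_s17]
  have hrpa : 0 < det2 r p a := by rw [← det2_rotate_s17]; exact hrp.1
  have hrqa : 0 < det2 r q a := by rw [← det2_rotate_s17]; exact hrq.1
  have hpqa : 0 < det2 p q a := by rw [← det2_rotate_s17]; exact hpq.1
  simpa [PositivelyOriented, Fin.forall_fin_succ] using
    ⟨⟨⟨hrp.2, hrq.2, hbra⟩, ⟨hpq.2, hbpa⟩, hbqa⟩, ⟨⟨hrpq, hrpa⟩, hrqa⟩, hpqa⟩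

end AngularOrder

section Pentagon

variable {P S : Set Pt} {a b p q r : Pt}

theorem exists_det2_pos_of_mem_convexHull (hgp : GenPos S) (hS : ∀ s ∈ S, 0 < det2 a b s)
    (hord : ∀ q ∈ S, q ≠ p → AngularlyBefore a b p q ∨ AngularlyBefore a b q p)
    (hp : p ∈ S) (hpS : p ∈ convexHull ℝ (S \ {p})) :
    ∃ q ∈ S, ∃ r ∈ S, AngularlyBefore a b r p ∧ AngularlyBefore a b p q ∧ 0 < det2 r p q := by
  by_contra! hcon
  have hsub : S \ {p} ⊆
      {r ∈ S | AngularlyBefore a b r p} ∪ {q ∈ S | AngularlyBefore a b p q} := fun q hq =>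
    (hord q hq.1 hq.2).symm.imp (⟨hq.1, ·⟩) (⟨hq.1, ·⟩)
  refine notMem_convexHull_union ?_ ?_ ?_ (convexHull_mono hsub hpS)
  · rintro r ⟨hr, hrp⟩ q ⟨hq, hpq⟩
    have hrq := hrp.trans (hS p hp) (hS r hr) (hS q hq) hpq
    have hne : det2 r p q ≠ 0 := hgp.det2_ne_zero_s17 hr hp hq hrp.ne hrq.ne hpq.ne
    rw [det2_swap_left]
    exact neg_pos.2 ((hcon q hq r hr hrp hpq).lt_of_ne hne)
  · intro hmem
    have : 0 < det2 p a p := det2_pos_of_mem_convexHull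
      (fun r hr => by rw [det2_rotate_s17]; exact hr.2.1) hmem
    simp at this
  · intro hmem
    have : 0 < det2 a p p := det2_pos_of_mem_convexHull (fun q hq => hq.2.1) hmem
    simp at this

theorem PositivelyOriented.notMem_interior_convexHull {x : Pt}
    (h : PositivelyOriented ![b, r, p, q, a])
    (htri : x ∈ convexHull ℝ ({p, a, b} : Set Pt) → x ∈ ({p, a, b} : Set Pt))
    (hq_ear : x ∉ openTriangle p q a) (hr_ear : x ∉ openTriangle b r p) :
    x ∉ interior (convexHull ℝ (Set.range ![b, r, p, q, a])) := fun hx => by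
  have hedge := h.det2_edge_pos_of_mem_interior_convexHull hx
  have hbr : 0 < det2 b r x := hedge 0
  have hrp : 0 < det2 r p x := hedge 1
  have hpq : 0 < det2 p q x := hedge 2
  have hqa : 0 < det2 q a x := hedge 3
  have hab : 0 < det2 a b x := hedge 4
  have hpa : 0 ≤ det2 p a x := by
    rw [det2_swap_left, neg_nonneg]
    exact not_lt.1 fun hap => hq_ear ⟨hpq, hqa, hap⟩
  have hbp : 0 ≤ det2 b p x := by
    rw [det2_swap_left, neg_nonneg]
    exact not_lt.1 fun hpb => hr_ear ⟨hbr, hrp, hpb⟩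
  have hbpa : 0 < det2 b p a := h (i := 0) (j := 2) (k := 4) (by simp) (by simp)
  have hpab : 0 < det2 p a b := by rwa [← det2_rotate_s17]
  have hxp : x ≠ p := by
    rintro rfl
    simp at hpq
  exact notMem_convexHull_of_det2_pos hab hxp htri
    (mem_convexHull_triple_of_det2_nonneg hpab hpa hab.le hbp)

theorem exists_empty_pentagon (hP : P.Finite)
    (htri : ∀ x ∈ P, x ∈ convexHull ℝ ({p, a, b} : Set Pt) → x ∈ ({p, a, b} : Set Pt))
    (hq : q ∈ P) (hr : r ∈ P) (h : PositivelyOriented ![b, r, p, q, a]) :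
    ∃ q' ∈ P, ∃ r' ∈ P, PositivelyOriented ![b, r', p, q', a] ∧
      ∀ x ∈ P, x ∉ interior (convexHull ℝ (Set.range ![b, r', p, q', a])) := by
  have hupd₃ (x : Pt) : Function.update ![b, r, p, q, a] 3 x = ![b, r, p, x, a] := by
    funext i; fin_cases i <;> rfl
  obtain ⟨q', hq', hpos, hq_ear⟩ := h.exists_forall_notMem_openTriangle hP
    (i := 2) (j := 3) (k := 4) (by simp) (by simp) hq
  rw [hupd₃] at hpos
  have hupd₁ (x : Pt) : Function.update ![b, r, p, q', a] 1 x = ![b, x, p, q', a] := by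
    funext i; fin_cases i <;> rfl
  obtain ⟨r', hr', hpos', hr_ear⟩ := hpos.exists_forall_notMem_openTriangle hP
    (i := 0) (j := 1) (k := 2) (by simp) (by simp) hr
  rw [hupd₁] at hpos'
  exact ⟨q', hq', r', hr', hpos', fun x hx =>
    hpos'.notMem_interior_convexHull (htri x hx) (hq_ear x hx) (hr_ear x hx)⟩

theorem exists_convexCyclicOrder_of_mem_convexHull (hP : P.Finite) (hSP : S ⊆ P)
    (hgp : GenPos S) (hS : ∀ s ∈ S, 0 < det2 a b s)
    (htri : ∀ s ∈ S, ∀ x ∈ P, x ∈ convexHull ℝ ({s, a, b} : Set Pt) →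
      x ∈ ({s, a, b} : Set Pt))
    (hp : p ∈ S) (hpS : p ∈ convexHull ℝ (S \ {p})) :
    ∃ q ∈ P, ∃ r ∈ P, ConvexCyclicOrder ![p, q, a, b, r] ∧
      ∀ x ∈ P, x ∉ interior (convexHull ℝ ({p, q, a, b, r} : Set Pt)) := by
  have hord : ∀ q ∈ S, q ≠ p → AngularlyBefore a b p q ∨ AngularlyBefore a b q p :=
    fun q hq hqp => angularlyBefore_or_angularlyBefore (hS p hp) (hS q hq)
      (notMem_convexHull_of_det2_pos (hS q hq) hqp (htri p hp q (hSP hq)))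
      (notMem_convexHull_of_det2_pos (hS p hp) hqp.symm (htri q hq p (hSP hp)))
  obtain ⟨q, hq, r, hr, hrp, hpq, hrpq⟩ := exists_det2_pos_of_mem_convexHull hgp hS hord hp hpS
  obtain ⟨q', hq', r', hr', h, hempty⟩ := exists_empty_pentagon hP (htri p hp) (hSP hq) (hSP hr)
    (hrp.positivelyOriented (hS p hp) (hS r hr) (hS q hq) hpq hrpq)
  refine ⟨q', hq', r', hr', ?_, ?_⟩
  · convert h.convexCyclicOrder.comp_add_right 2 using 1
    funext i
    fin_cases i <;> rfl
  · have hrange : ({p, q', a, b, r'} : Set Pt) = Set.range ![b, r', p, q', a] := by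
      simp only [Matrix.range_cons, Matrix.range_empty]
      grind
    rwa [hrange]

end Pentagon

theorem stmt17_general (P : Set Pt) (hPfin : P.Finite) (a b : Pt) (S : Set Pt) (hSP : S ⊆ P)
    (hgp : GenPos S)
    (hside : ∃ σ : ℝ, (σ = 1 ∨ σ = -1) ∧ ∀ s ∈ S, 0 < σ * det2 a b s)
    (htri : ∀ s ∈ S, ∀ x ∈ P, x ∈ convexHull ℝ ({s, a, b} : Set Pt) →
      x ∈ ({s, a, b} : Set Pt))
    (hno5 : ∀ s ∈ S, ¬ ∃ q' ∈ P, ∃ r' ∈ P,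
      ConvexCyclicOrder ![s, q', a, b, r'] ∧
      ∀ x ∈ P, x ∉ interior (convexHull ℝ ({s, q', a, b, r'} : Set Pt))) :
    ConvexPos S := by
  intro p hp hpS
  obtain ⟨σ, rfl | rfl, hS⟩ := hside
  · simp only [one_mul] at hS
    exact hno5 p hp (exists_convexCyclicOrder_of_mem_convexHull hPfin hSP hgp hS htri hp hpS)
  · have hS' : ∀ s ∈ S, 0 < det2 b a s := fun s hs => by
      rw [det2_swap_left, ← neg_one_mul]
      exact hS s hs
    simp only [Set.pair_comm a b] at htri
    obtain ⟨q, hq, r, hr, h, hempty⟩ :=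
      exists_convexCyclicOrder_of_mem_convexHull hPfin hSP hgp hS' htri hp hpS
    refine hno5 p hp ⟨r, hr, q, hq, ?_, ?_⟩
    · convert h.comp_neg using 1
      funext i
      fin_cases i <;> rfl
    · have hset : ({p, r, a, b, q} : Set Pt) = {p, q, b, a, r} := by grind
      rwa [hset]

/-- let `a, b ∈ P` be distinct and let `S ⊆ P` be a set of
points, each forming an empty triangle with `a` and `b`, all lying strictly on
the same side of the line `ab`. If for every `s ∈ S` there is no 5-hole of `P`
of the form `s, q', a, b, r'`, then `S` is in convex position. -/
theorem stmt17 (P : Set Pt) (hPfin : P.Finite) (hgp : GenPos P)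
    (a b : Pt) (ha : a ∈ P) (hb : b ∈ P) (hab : a ≠ b)
    (S : Set Pt) (hSP : S ⊆ P) (haS : a ∉ S) (hbS : b ∉ S)
    (hside : ∃ σ : ℝ, (σ = 1 ∨ σ = -1) ∧ ∀ s ∈ S, 0 < σ * det2 a b s)
    (htri : ∀ s ∈ S, ∀ x ∈ P, x ∈ convexHull ℝ ({s, a, b} : Set Pt) →
      x ∈ ({s, a, b} : Set Pt))
    (hno5 : ∀ s ∈ S, ¬ ∃ q' ∈ P, ∃ r' ∈ P,
      ConvexCyclicOrder ![s, q', a, b, r'] ∧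
      ∀ x ∈ P, x ∉ interior (convexHull ℝ ({s, q', a, b, r'} : Set Pt))) :
    ConvexPos S :=
  stmt17_general P hPfin a b S hSP (hgp.mono hSP) hside htri hno5
end
end
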